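/- Let F be a finite field with algebraic closure F̄ and let G be a finite group. Let V and V' be finite-dimensional F-vector spaces with representations of G such that V and V' have the same multiset of composition factors (with multiplicities) as F[G]-modules. Assume that every composition factor of the F̄[G]-module V ⊗_F F̄ which admits a nonzero G-invariant quadratic form has even dimension over F̄. Then for any nondegenerate G-invariant quadratic forms Q on V and Q' on V', the quadratic spaces (V, Q) and (V', Q') are isometric: there is an F-linear isomorphism φ : V → V' with Q'(φ(x)) = Q(x) for all x ∈ V. -/

import Mathlib

open QuadraticMap

/-- A chain of invariant subspaces for a family of linear endomorphisms indexed by a group. -/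
structure GSeries (K : Type*) {G V : Type*} [Field K] [Group G]
    [AddCommGroup V] [Module K V] (π : G → V →ₗ[K] V) (n : ℕ) where
  s : Fin (n + 1) → Submodule K V
  mono : Monotone s
  inv : ∀ (i : Fin (n + 1)) (g : G), ∀ x ∈ s i, π g x ∈ s i
  bot : s 0 = ⊥
  top : s (Fin.last n) = ⊤

namespace GSeries

variable {K G V : Type*} [Field K] [Group G] [AddCommGroup V] [Module K V]
  {π : G → V →ₗ[K] V} {n : ℕ}

/-- The `i`-th subquotient of the series. -/
abbrev factor (c : GSeries K π n) (i : Fin n) : Type _ :=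
  ↥(c.s i.succ) ⧸ Submodule.comap (c.s i.succ).subtype (c.s i.castSucc)

/-- The induced action of `g : G` on the `i`-th subquotient. -/
noncomputable def act (c : GSeries K π n) (i : Fin n) (g : G) :
    c.factor i →ₗ[K] c.factor i :=
  Submodule.mapQ _ _ ((π g).restrict (c.inv i.succ g)) (by
    intro x hx
    simp only [Submodule.mem_comap, Submodule.subtype_apply, LinearMap.restrict_apply] at hx ⊢
    exact c.inv i.castSucc g _ hx)

/-- The `i`-th subquotient is a simple `K[G]`-module. -/
def SimpleAt (c : GSeries K π n) (i : Fin n) : Prop :=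
  Nontrivial (c.factor i) ∧
    ∀ W : Submodule K (c.factor i), (∀ g, ∀ x ∈ W, c.act i g x ∈ W) → W = ⊥ ∨ W = ⊤

/-- The series is a composition series: all the subquotients are simple. -/
def IsCompositionSeries (c : GSeries K π n) : Prop := ∀ i, c.SimpleAt i

/-- The `i`-th factor of `c` and the `j`-th factor of `c'` are isomorphic as
`K`-linear `G`-modules. -/
def FactorEquiv {V' : Type*} [AddCommGroup V'] [Module K V'] {π' : G → V' →ₗ[K] V'}
    (c : GSeries K π n) (i : Fin n) (c' : GSeries K π' n) (j : Fin n) : Prop :=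
  ∃ e : c.factor i ≃ₗ[K] c'.factor j, ∀ g x, e (c.act i g x) = c'.act j g (e x)

end GSeries

namespace QS
section mult
variable {R : Type*} [Ring R]
variable (S : Type*) [AddCommGroup S] [Module R S]
variable {M : Type*} [AddCommGroup M] [Module R M] {M' : Type*} [AddCommGroup M'] [Module R M']

/-- subquotient -/
abbrev SQ (A B : Submodule R M) : Type _ := ↥B ⧸ A.comap B.subtype

open Classical in
/-- indicator of a subquotient being isomorphic to `S` -/
noncomputable def ind (A B : Submodule R M) : ℕ := if Nonempty (SQ A B ≃ₗ[R] S) then 1 else 0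

/-- number of factors isomorphic to `S` -/
noncomputable def cnt (c : CompositionSeries (Submodule R M)) : ℕ :=
  ∑ i : Fin c.length, ind S (c i.castSucc) (c i.succ)

variable {S} in
open Classical in
lemma ind_congr {A B : Submodule R M} {A' B' : Submodule R M'}
    (e : Nonempty (SQ A B ≃ₗ[R] SQ A' B')) : ind S A B = ind S A' B' := by
  obtain ⟨e⟩ := e
  unfold ind
  have : Nonempty (SQ A B ≃ₗ[R] S) ↔ Nonempty (SQ A' B' ≃ₗ[R] S) :=
    ⟨fun ⟨f⟩ => ⟨e.symm.trans f⟩, fun ⟨f⟩ => ⟨e.trans f⟩⟩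
  exact if_congr this rfl rfl

variable (R M) in
/-- multiplicity -/
noncomputable def mult : ℕ :=
  open Classical in
  if h : ∃ c : CompositionSeries (Submodule R M), c.head = ⊥ ∧ c.last = ⊤ then cnt S h.choose else 0

lemma mult_eq (c : CompositionSeries (Submodule R M)) (h1 : c.head = ⊥) (h2 : c.last = ⊤) :
    mult R S M = cnt S c := by
  have h : ∃ c : CompositionSeries (Submodule R M), c.head = ⊥ ∧ c.last = ⊤ := ⟨c, h1, h2⟩
  unfold mult
  rw [dif_pos h]
  obtain ⟨f, hf⟩ := CompositionSeries.jordan_holder h.choose c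
    (h.choose_spec.1.trans h1.symm) (h.choose_spec.2.trans h2.symm)
  unfold cnt
  rw [← Equiv.sum_comp f]
  exact Finset.sum_congr rfl fun i _ => ind_congr ⟨(hf i).linearEquiv⟩

/-- subquotients correspond under a map -/
lemma sq_equiv {A B : Submodule R M} {A' B' : Submodule R M'} (f : M →ₗ[R] M')
    (h1 : ∀ x ∈ B, f x ∈ B') (h2 : ∀ y ∈ B', ∃ x ∈ B, f x = y)
    (h3 : ∀ x ∈ B, f x ∈ A' ↔ x ∈ A) : Nonempty (SQ A B ≃ₗ[R] SQ A' B') := by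
  let g : B →ₗ[R] SQ A' B' := (Submodule.mkQ _).comp (f.restrict h1)
  have hg : Function.Surjective g := by
    intro y
    obtain ⟨⟨y, hy⟩, rfl⟩ := Submodule.mkQ_surjective _ y
    obtain ⟨x, hx, rfl⟩ := h2 y hy
    exact ⟨⟨x, hx⟩, rfl⟩
  have hk : LinearMap.ker g = A.comap B.subtype := by
    ext ⟨x, hx⟩
    simp [g, h3 x hx]
  exact ⟨(Submodule.quotEquivOfEq _ _ hk.symm).trans (g.quotKerEquivOfSurjective hg)⟩

lemma covBy_iff {A B : Submodule R M} (hAB : A ≤ B) :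
    A ⋖ B ↔ IsSimpleModule R (SQ A B) := covBy_iff_quot_is_simple hAB

lemma covBy_map (N : Submodule R M) {A B : Submodule R N} (h : A ⋖ B) :
    Nonempty (SQ (A.map N.subtype) (B.map N.subtype) ≃ₗ[R] SQ A B) ∧
      A.map N.subtype ⋖ B.map N.subtype := by
  have e : Nonempty (SQ A B ≃ₗ[R] SQ (A.map N.subtype) (B.map N.subtype)) := by
    refine sq_equiv N.subtype (fun x hx => ⟨x, hx, rfl⟩) ?_ ?_
    · rintro _ ⟨x, hx, rfl⟩; exact ⟨x, hx, rfl⟩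
    · intro x hx; simp
  obtain ⟨e⟩ := e
  refine ⟨⟨e.symm⟩, ?_⟩
  rw [covBy_iff (Submodule.map_mono h.le)]
  have := (covBy_iff h.le).1 h
  exact IsSimpleModule.congr e.symm

lemma covBy_comap (N : Submodule R M) {A B : Submodule R (M ⧸ N)} (h : A ⋖ B) :
    Nonempty (SQ (A.comap N.mkQ) (B.comap N.mkQ) ≃ₗ[R] SQ A B) ∧
      A.comap N.mkQ ⋖ B.comap N.mkQ := by
  have e : Nonempty (SQ (A.comap N.mkQ) (B.comap N.mkQ) ≃ₗ[R] SQ A B) := by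
    refine sq_equiv N.mkQ (fun x hx => hx) ?_ ?_
    · intro y hy
      obtain ⟨x, rfl⟩ := N.mkQ_surjective y
      exact ⟨x, hy, rfl⟩
    · intro x hx; simp
  obtain ⟨e⟩ := e
  refine ⟨⟨e⟩, ?_⟩
  rw [covBy_iff (Submodule.comap_mono h.le)]
  have := (covBy_iff h.le).1 h
  exact IsSimpleModule.congr e

/-- push a series forward along the inclusion -/
noncomputable def serMap (N : Submodule R M) (c : CompositionSeries (Submodule R N)) :
    CompositionSeries (Submodule R M) where
  length := c.length
  toFun i := (c i).map N.subtype
  step i := (covBy_map N (c.step i)).2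

/-- pull a series back along the projection -/
noncomputable def serComap (N : Submodule R M) (c : CompositionSeries (Submodule R (M ⧸ N))) :
    CompositionSeries (Submodule R M) where
  length := c.length
  toFun i := (c i).comap N.mkQ
  step i := (covBy_comap N (c.step i)).2

lemma cnt_serMap (N : Submodule R M) (c : CompositionSeries (Submodule R N)) :
    cnt S (serMap N c) = cnt S c :=
  Finset.sum_congr rfl fun i _ => ind_congr (covBy_map N (c.step i)).1

lemma cnt_serComap (N : Submodule R M) (c : CompositionSeries (Submodule R (M ⧸ N))) :
    cnt S (serComap N c) = cnt S c :=
  Finset.sum_congr rfl fun i _ => ind_congr (covBy_comap N (c.step i)).1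

lemma cnt_smash (c d : CompositionSeries (Submodule R M)) (h : c.last = d.head) :
    cnt S (RelSeries.smash c d h) = cnt S c + cnt S d := by
  unfold cnt
  refine (Fin.sum_univ_add (a := c.length) (b := d.length) _).trans ?_
  congr 1
  · refine Finset.sum_congr rfl fun i _ => ?_
    exact congrArg₂ (ind S) (RelSeries.smash_castAdd h i) (RelSeries.smash_succ_castAdd h i)
  · refine Finset.sum_congr rfl fun i _ => ?_
    exact congrArg₂ (ind S) (RelSeries.smash_natAdd h i) (RelSeries.smash_succ_natAdd h i)

/-- a series through a given submodule -/
lemma exists_ser (N : Submodule R M) [IsNoetherian R M] [IsArtinian R M] :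
    ∃ (c d : CompositionSeries (Submodule R M)) (_ : c.last = d.head),
      c.head = ⊥ ∧ c.last = N ∧ d.head = N ∧ d.last = ⊤ ∧ cnt S c = mult R S N ∧
      cnt S d = mult R S (M ⧸ N) := by
  obtain ⟨c, hc1, hc2⟩ := exists_compositionSeries_of_isNoetherian_isArtinian R N
  obtain ⟨d, hd1, hd2⟩ := exists_compositionSeries_of_isNoetherian_isArtinian R (M ⧸ N)
  have a1 : (serMap N c).head = ⊥ := by
    change (c.head).map N.subtype = ⊥; rw [hc1]; simp
  have a2 : (serMap N c).last = N := by
    change (c.last).map N.subtype = N; rw [hc2]; simp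
  have a3 : (serComap N d).head = N := by
    change (d.head).comap N.mkQ = N; rw [hd1]; simp
  have a4 : (serComap N d).last = ⊤ := by
    change (d.last).comap N.mkQ = ⊤; rw [hd2]; simp
  refine ⟨serMap N c, serComap N d, a2.trans a3.symm, a1, a2, a3, a4, ?_, ?_⟩
  · rw [cnt_serMap, mult_eq S c hc1 hc2]
  · rw [cnt_serComap, mult_eq S d hd1 hd2]

lemma mult_add (N : Submodule R M) [IsNoetherian R M] [IsArtinian R M] :
    mult R S M = mult R S N + mult R S (M ⧸ N) := by
  obtain ⟨c, d, h, h1, h2, h3, h4, h5, h6⟩ := exists_ser S N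
  rw [mult_eq S (RelSeries.smash c d h) (by simpa using! h1) (by simpa using! h4), cnt_smash, h5, h6]

lemma mult_of_subsingleton [Subsingleton M] : mult R S M = 0 := by
  let c : CompositionSeries (Submodule R M) := RelSeries.singleton _ ⊥
  rw [mult_eq S c rfl (Subsingleton.elim _ _)]
  rfl

lemma mult_congr [IsNoetherian R M] [IsArtinian R M] (e : M ≃ₗ[R] M') :
    mult R S M = mult R S M' := by
  obtain ⟨c, h1, h2⟩ := exists_compositionSeries_of_isNoetherian_isArtinian R M
  have key : ∀ i : Fin c.length, Nonempty (SQ (c i.castSucc) (c i.succ) ≃ₗ[R]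
      SQ ((c i.castSucc).map (e : M →ₗ[R] M')) ((c i.succ).map (e : M →ₗ[R] M'))) := by
    intro i
    refine sq_equiv (e : M →ₗ[R] M') (fun x hx => ⟨x, hx, rfl⟩) ?_ ?_
    · rintro _ ⟨x, hx, rfl⟩; exact ⟨x, hx, rfl⟩
    · intro x hx; simp
  let c' : CompositionSeries (Submodule R M') :=
    { length := c.length
      toFun := fun i => (c i).map (e : M →ₗ[R] M')
      step := fun i => by
        obtain ⟨f⟩ := key i
        have h : c i.castSucc ⋖ c i.succ := c.step i
        have := (covBy_iff h.le).1 h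
        exact (covBy_iff (Submodule.map_mono h.le)).2 (IsSimpleModule.congr f.symm) }
  have b1 : c'.head = ⊥ := by change (c.head).map _ = ⊥; rw [h1]; simp
  have b2 : c'.last = ⊤ := by change (c.last).map _ = ⊤; rw [h2]; simp
  rw [mult_eq S c h1 h2, mult_eq S c' b1 b2]
  exact Finset.sum_congr rfl fun i _ => ind_congr (key i)

open Classical in
lemma mult_of_simple [IsSimpleModule R M] :
    mult R S M = if Nonempty (M ≃ₗ[R] S) then 1 else 0 := by
  let c : CompositionSeries (Submodule R M) :=
    { length := 1
      toFun := ![⊥, ⊤]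
      step := fun i => by
        have : i = 0 := Subsingleton.elim _ _
        subst this
        exact bot_covBy_top }
  rw [mult_eq S c rfl rfl]
  have : Nonempty (SQ (⊥ : Submodule R M) ⊤ ≃ₗ[R] M) := by
    have h : Nonempty (SQ (⊥ : Submodule R M) ⊤ ≃ₗ[R] (↥(⊤ : Submodule R M))) :=
      ⟨(Submodule.quotEquivOfEqBot _ (by
        rw [Submodule.comap_bot]; exact Submodule.ker_subtype _))⟩
    exact ⟨h.some.trans Submodule.topEquiv⟩
  obtain ⟨e⟩ := this
  have h2 : Nonempty (SQ (⊥ : Submodule R M) ⊤ ≃ₗ[R] S) ↔ Nonempty (M ≃ₗ[R] S) :=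
    ⟨fun ⟨f⟩ => ⟨e.symm.trans f⟩, fun ⟨f⟩ => ⟨e.trans f⟩⟩
  change ∑ i : Fin 1, ind S (c i.castSucc) (c i.succ) = _
  rw [Fin.sum_univ_one]
  change ind S (⊥ : Submodule R M) ⊤ = _
  unfold ind
  exact if_congr h2 rfl rfl

lemma exists_of_mult_ne_zero (h : mult R S M ≠ 0) :
    ∃ A B : Submodule R M, A ⋖ B ∧ Nonempty (SQ A B ≃ₗ[R] S) := by
  unfold mult at h
  split_ifs at h with hc
  · obtain ⟨i, -, hi⟩ := Finset.exists_ne_zero_of_sum_ne_zero h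
    refine ⟨_, _, hc.choose.step i, ?_⟩
    unfold ind at hi
    by_contra hh
    exact hi (if_neg hh)
  · exact absurd rfl h

lemma mult_ne_zero_of_surj [IsNoetherian R M] [IsArtinian R M] [IsSimpleModule R S]
    (N : Submodule R M) (f : N →ₗ[R] S) (hf : Function.Surjective f) : mult R S M ≠ 0 := by
  rw [mult_add S N, mult_add S (LinearMap.ker f),
    mult_congr S (f.quotKerEquivOfSurjective hf), mult_of_simple (M := S) S,
    if_pos ⟨LinearEquiv.refl _ _⟩]
  omega

end mult
end QS

set_option linter.unusedSectionVars false

namespace QS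
section forms
variable {K G : Type*} [Field K] [Group G]

variable (K) in
/-- group element in the group algebra -/
noncomputable abbrev ga (g : G) : MonoidAlgebra K G := MonoidAlgebra.single g 1

lemma ga_mul (g h : G) : ga K g * ga K h = ga K (g * h) := by
  simp [MonoidAlgebra.single_mul_single]

lemma ga_one : ga K (1 : G) = 1 := rfl

variable {M : Type*} [AddCommGroup M] [Module K M] [Module (MonoidAlgebra K G) M]
  [IsScalarTower K (MonoidAlgebra K G) M]
variable {N : Type*} [AddCommGroup N] [Module K N] [Module (MonoidAlgebra K G) N]
  [IsScalarTower K (MonoidAlgebra K G) N]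

lemma ga_inv_smul (g : G) (x : M) : ga K g⁻¹ • ga K g • x = x := by
  rw [smul_smul, ga_mul, inv_mul_cancel, ga_one, one_smul]

lemma ga_smul_inv (g : G) (x : M) : ga K g • ga K g⁻¹ • x = x := by
  rw [smul_smul, ga_mul, mul_inv_cancel, ga_one, one_smul]

variable (G) in
/-- invariant quadratic form -/
def QInv (Q : QuadraticForm K M) : Prop := ∀ (g : G) (x : M), Q (ga K g • x) = Q x

variable (G) in
/-- invariant bilinear form -/
def BInv (B : LinearMap.BilinForm K M) : Prop :=
  ∀ (g : G) (x y : M), B (ga K g • x) (ga K g • y) = B x y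

/-- left-nondegenerate bilinear form -/
def ND {K M : Type*} [Field K] [AddCommGroup M] [Module K M] (B : LinearMap.BilinForm K M) : Prop :=
  ∀ x : M, (∀ y, B x y = 0) → x = 0

lemma QInv.polar {Q : QuadraticForm K M} (h : QInv G Q) : BInv G (polarBilin Q) := by
  intro g x y
  simp only [polarBilin_apply_apply, QuadraticMap.polar, ← smul_add, h g]

lemma BInv.left {B : LinearMap.BilinForm K M} (h : BInv G B) (g : G) (x y : M) :
    B (ga K g • x) y = B x (ga K g⁻¹ • y) := by
  rw [← h g x, ga_smul_inv]

lemma polar_symm {K M : Type*} [Field K] [AddCommGroup M] [Module K M] (Q : QuadraticForm K M)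
    (x y : M) : polarBilin Q x y = polarBilin Q y x := by
  simp [QuadraticMap.polar_comm]

lemma smul_mem_of_stable (N : Submodule K M) (h : ∀ (g : G), ∀ x ∈ N, ga K g • x ∈ N)
    (r : MonoidAlgebra K G) (x : M) (hx : x ∈ N) : r • x ∈ N := by
  induction r using MonoidAlgebra.induction_on with
  | of g => exact h g x hx
  | add a b ha hb => rw [add_smul]; exact N.add_mem ha hb
  | smul c a ha => rw [smul_assoc]; exact N.smul_mem c ha

/-- a stable subspace as a submodule over the group algebra -/
def ofStable (N : Submodule K M) (h : ∀ (g : G), ∀ x ∈ N, ga K g • x ∈ N) :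
    Submodule (MonoidAlgebra K G) M where
  carrier := N
  add_mem' := N.add_mem
  zero_mem' := N.zero_mem
  smul_mem' r x hx := smul_mem_of_stable N h r x hx

@[simp] lemma mem_ofStable (N : Submodule K M) (h : ∀ (g : G), ∀ x ∈ N, ga K g • x ∈ N) (x : M) :
    x ∈ ofStable N h ↔ x ∈ N := Iff.rfl

/-- orthogonal complement -/
def perp (B : LinearMap.BilinForm K M) (hB : BInv G B) (N : Submodule (MonoidAlgebra K G) M) :
    Submodule (MonoidAlgebra K G) M :=
  ofStable
    { carrier := {x | ∀ y ∈ N, B x y = 0}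
      add_mem' := fun {a b} ha hb y hy => by simp [ha y hy, hb y hy]
      zero_mem' := fun y _ => by simp
      smul_mem' := fun c a ha y hy => by simp [ha y hy] }
    (fun g x hx y hy => by
      rw [hB.left]; exact hx _ (N.smul_mem _ hy))

lemma mem_perp {B : LinearMap.BilinForm K M} {hB : BInv G B}
    {N : Submodule (MonoidAlgebra K G) M} {x : M} :
    x ∈ perp B hB N ↔ ∀ y ∈ N, B x y = 0 := Iff.rfl

lemma nondeg_of_ND {B : LinearMap.BilinForm K M} (hs : ∀ x y, B x y = B y x) (h : ND B) :
    B.Nondegenerate := by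
  refine ⟨?_, ?_⟩
  · intro x hx; exact h x hx
  · intro x hx; exact h x fun y => by rw [hs]; exact hx y

section
variable {B : LinearMap.BilinForm K M} (hB : BInv G B)

lemma perp_restrict (hs : ∀ x y, B x y = B y x)
    (N : Submodule (MonoidAlgebra K G) M) :
    (perp B hB N).restrictScalars K = B.orthogonal (N.restrictScalars K) := by
  ext x
  rw [Submodule.restrictScalars_mem, mem_perp, LinearMap.BilinForm.mem_orthogonal_iff]
  refine forall₂_congr fun y _ => ?_
  rw [hs]

variable [FiniteDimensional K M]

lemma finrank_perp (hs : ∀ x y, B x y = B y x) (h : ND B)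
    (N : Submodule (MonoidAlgebra K G) M) :
    Module.finrank K N + Module.finrank K (perp B hB N) = Module.finrank K M := by
  have h1 := LinearMap.BilinForm.finrank_orthogonal (nondeg_of_ND hs h) (N.restrictScalars K)
  rw [← perp_restrict hB hs] at h1
  have h2 : Module.finrank K (perp B hB N) = Module.finrank K M - Module.finrank K N := h1
  have h3 : Module.finrank K N ≤ Module.finrank K M := Submodule.finrank_le (N.restrictScalars K)
  omega

lemma perp_perp (hs : ∀ x y, B x y = B y x) (h : ND B)
    (N : Submodule (MonoidAlgebra K G) M) : perp B hB (perp B hB N) = N := by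
  apply Submodule.restrictScalars_injective K
  rw [perp_restrict hB hs, perp_restrict hB hs]
  exact LinearMap.BilinForm.orthogonal_orthogonal (nondeg_of_ND hs h)
    (fun x y hxy => by rw [hs]; exact hxy) _

lemma isCompl_perp (hs : ∀ x y, B x y = B y x) (h : ND B)
    (N : Submodule (MonoidAlgebra K G) M) (hd : N ⊓ perp B hB N = ⊥) :
    IsCompl N (perp B hB N) := by
  have hd' : Disjoint (N.restrictScalars K) ((perp B hB N).restrictScalars K) := by
    rw [disjoint_iff]
    ext x
    have := Submodule.ext_iff.1 hd x
    simpa using this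
  refine ⟨disjoint_iff.2 hd, ?_⟩
  have h1 : (N.restrictScalars K) ⊔ ((perp B hB N).restrictScalars K) = ⊤ := by
    apply Submodule.eq_top_of_disjoint _ _ _ hd'
    exact (finrank_perp hB hs h N).ge
  rw [codisjoint_iff]
  rw [eq_top_iff]
  intro x _
  have hx : x ∈ (N.restrictScalars K) ⊔ ((perp B hB N).restrictScalars K) := by rw [h1]; trivial
  obtain ⟨a, ha, b, hb, rfl⟩ := Submodule.mem_sup.1 hx
  exact Submodule.mem_sup.2 ⟨a, ha, b, hb, rfl⟩

end

lemma exists_adjoint [FiniteDimensional K M] {B : LinearMap.BilinForm K M} (hB : BInv G B)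
    (h : ND B) {C : LinearMap.BilinForm K N} (hC : BInv G C)
    (p : M →ₗ[MonoidAlgebra K G] N) :
    ∃ p' : N →ₗ[MonoidAlgebra K G] M, ∀ n m, B (p' n) m = C n (p m) := by
  have hinj : Function.Injective (B : M →ₗ[K] Module.Dual K M) := by
    rw [injective_iff_map_eq_zero]
    intro x hx
    exact h x fun y => by rw [hx]; rfl
  let e : M ≃ₗ[K] Module.Dual K M :=
    LinearMap.linearEquivOfInjective B hinj (Subspace.dual_finrank_eq).symm
  have he : ∀ x y, e x y = B x y := fun x y => rfl
  let f : N →ₗ[K] M := e.symm.toLinearMap.comp (C.compl₂ (p.restrictScalars K))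
  have hf : ∀ n m, B (f n) m = C n (p m) := by
    intro n m
    rw [← he]
    simp [f]
  refine ⟨MonoidAlgebra.equivariantOfLinearOfComm f ?_, hf⟩
  intro g v
  apply sub_eq_zero.1
  apply h
  intro y
  have hBg := hB.left g (f v) y
  rw [map_sub, LinearMap.sub_apply, hf]
  erw [hBg]
  rw [hf, hC.left, p.map_smul, sub_self]

end forms
end QS

set_option linter.unusedSectionVars false

namespace QS
section red
variable {K G : Type*} [Field K] [Group G]
variable {M : Type*} [AddCommGroup M] [Module K M] [Module (MonoidAlgebra K G) M]
  [IsScalarTower K (MonoidAlgebra K G) M]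

lemma noeth (K : Type*) {G M : Type*} [Field K] [Group G] [AddCommGroup M] [Module K M]
    [Module (MonoidAlgebra K G) M] [IsScalarTower K (MonoidAlgebra K G) M]
    [FiniteDimensional K M] : IsNoetherian (MonoidAlgebra K G) M := isNoetherian_of_tower K inferInstance
lemma artin (K : Type*) {G M : Type*} [Field K] [Group G] [AddCommGroup M] [Module K M]
    [Module (MonoidAlgebra K G) M] [IsScalarTower K (MonoidAlgebra K G) M]
    [FiniteDimensional K M] : IsArtinian (MonoidAlgebra K G) M := isArtinian_of_tower K inferInstance

lemma finiteDim_sub [FiniteDimensional K M] (N : Submodule (MonoidAlgebra K G) M) :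
    FiniteDimensional K N :=
  inferInstanceAs (FiniteDimensional K (N.restrictScalars K))

lemma finiteDim_quot [FiniteDimensional K M] (N : Submodule (MonoidAlgebra K G) M) :
    FiniteDimensional K (M ⧸ N) :=
  Module.Finite.of_surjective (N.mkQ.restrictScalars K) N.mkQ_surjective

lemma finrank_quot [FiniteDimensional K M] (N : Submodule (MonoidAlgebra K G) M) :
    Module.finrank K (M ⧸ N) + Module.finrank K N = Module.finrank K M := by
  have := LinearMap.finrank_range_add_finrank_ker (N.mkQ.restrictScalars K)
  rw [LinearMap.range_eq_top.2 (show Function.Surjective (N.mkQ.restrictScalars K) from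
    N.mkQ_surjective), finrank_top] at this
  have h2 : LinearMap.ker (N.mkQ.restrictScalars K) = N.restrictScalars K := by
    ext x; simp
  rw [h2] at this
  exact this

/-- restriction of a quadratic form to a submodule -/
noncomputable def resQ (Q : QuadraticForm K M) (N : Submodule (MonoidAlgebra K G) M) :
    QuadraticForm K N := Q.comp (N.subtype.restrictScalars K)

@[simp] lemma resQ_apply (Q : QuadraticForm K M) (N : Submodule (MonoidAlgebra K G) M) (x : N) :
    resQ Q N x = Q x := rfl

lemma resQ_inv {Q : QuadraticForm K M} (h : QInv G Q) (N : Submodule (MonoidAlgebra K G) M) :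
    QInv G (resQ Q N) := fun g x => h g x

lemma resQ_polar (Q : QuadraticForm K M) (N : Submodule (MonoidAlgebra K G) M) (x y : N) :
    polarBilin (resQ Q N) x y = polarBilin Q x y := rfl

lemma resQ_ND {Q : QuadraticForm K M} (hi : QInv G Q) (N : Submodule (MonoidAlgebra K G) M)
    (h : N ⊓ perp (polarBilin Q) hi.polar N = ⊥) : ND (polarBilin (resQ Q N)) := by
  intro x hx
  have : (x : M) ∈ N ⊓ perp (polarBilin Q) hi.polar N :=
    ⟨x.2, fun y hy => hx ⟨y, hy⟩⟩
  rw [h] at this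
  exact Subtype.ext this

lemma resQ_ND_perp [FiniteDimensional K M] {Q : QuadraticForm K M} (hi : QInv G Q)
    (hn : ND (polarBilin Q)) (N : Submodule (MonoidAlgebra K G) M)
    (h : N ⊓ perp (polarBilin Q) hi.polar N = ⊥) :
    ND (polarBilin (resQ Q (perp (polarBilin Q) hi.polar N))) := by
  apply resQ_ND hi
  rw [perp_perp _ (polar_symm Q) hn, inf_comm, h]

lemma mult_split (S : Type*) [AddCommGroup S] [Module (MonoidAlgebra K G) S]
    [FiniteDimensional K M] {A B : Submodule (MonoidAlgebra K G) M} (h : IsCompl A B) :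
    mult (MonoidAlgebra K G) S M = mult (MonoidAlgebra K G) S A + mult (MonoidAlgebra K G) S B := by
  have := noeth K (G := G) (M := M)
  have := artin K (G := G) (M := M)
  rw [mult_add S A, mult_congr S (Submodule.quotientEquivOfIsCompl A B h)]

lemma le_perp_of_Q {Q : QuadraticForm K M} (hi : QInv G Q) (T : Submodule (MonoidAlgebra K G) M)
    (hT : ∀ x ∈ T, Q x = 0) : T ≤ perp (polarBilin Q) hi.polar T := by
  intro x hx y hy
  simp [QuadraticMap.polar, hT _ hx, hT _ hy, hT _ (T.add_mem hx hy)]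

lemma red_aux {Q : QuadraticForm K M} (hi : QInv G Q)
    (T P : Submodule (MonoidAlgebra K G) M) (hT : ∀ x ∈ T, Q x = 0)
    (h1 : ∀ x ∈ P, ∀ t ∈ T, polar Q x t = 0)
    (h2 : ∀ x ∈ P, (∀ z ∈ P, polar Q x z = 0) → x ∈ T) :
    ∃ Q' : QuadraticForm K (SQ T P),
      (∀ x : P, Q' (Submodule.Quotient.mk x) = Q x) ∧
      QInv G Q' ∧ ND (polarBilin Q') := by
  let π : P →ₗ[K] (P ⧸ T.comap P.subtype) := LinearMap.restrictScalars K (T.comap P.subtype).mkQ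
  have hπ : Function.Surjective π := (T.comap P.subtype).mkQ_surjective
  obtain ⟨s, hs⟩ := π.exists_rightInverse_of_surjective (LinearMap.range_eq_top.2 hπ)
  have hs' : ∀ y, π (s y) = y := fun y => LinearMap.congr_fun hs y
  have hker : ∀ x : P, π x = 0 ↔ (x : M) ∈ T := fun x =>
    Submodule.Quotient.mk_eq_zero (T.comap P.subtype)
  have hga : ∀ (g : G) (x : P), ga K g • π x = π (ga K g • x) := fun g x => rfl
  have hmk : ∀ x : P, (Submodule.Quotient.mk x : SQ T P) = π x := fun x => rfl
  clear_value π
  obtain ⟨Q', hQ'⟩ : ∃ Q' : QuadraticForm K (SQ T P), ∀ y, Q' y = Q (s y : P) :=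
    ⟨(resQ Q P).comp s, fun y => rfl⟩
  have key : ∀ x : P, Q' (π x) = Q x := by
    intro x
    have h3 : ((s (π x) - x : P) : M) ∈ T := by
      rw [← hker, map_sub, hs', sub_self]
    have h5 : ((s (π x) : P) : M) = x + ((s (π x) - x : P) : M) := by
      rw [Submodule.coe_sub]; abel
    rw [hQ', h5, QuadraticMap.map_add Q, hT _ h3, h1 _ x.2 _ h3]; simp
  refine ⟨Q', fun x => by rw [hmk, key], ?_, ?_⟩
  · intro g y
    obtain ⟨x, rfl⟩ := hπ y
    rw [hga, key, key]
    exact hi g x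
  · intro y hy
    obtain ⟨x, rfl⟩ := hπ y
    rw [hker]
    refine h2 x x.2 fun z hz => ?_
    have := hy (π ⟨z, hz⟩)
    simp only [polarBilin_apply_apply, QuadraticMap.polar, ← map_add, key] at this
    exact this

lemma red [FiniteDimensional K M] {Q : QuadraticForm K M} (hi : QInv G Q)
    (hn : ND (polarBilin Q)) (T : Submodule (MonoidAlgebra K G) M)
    (hT : ∀ x ∈ T, Q x = 0) :
    ∃ Q' : QuadraticForm K (SQ T (perp (polarBilin Q) hi.polar T)),
      (∀ x : perp (polarBilin Q) hi.polar T, Q' (Submodule.Quotient.mk x) = Q x) ∧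
      QInv G Q' ∧ ND (polarBilin Q') := by
  apply red_aux hi T (perp (polarBilin Q) hi.polar T) hT
  · intro x hx t ht; exact hx t ht
  · intro x hx h
    have h1 : x ∈ perp (polarBilin Q) hi.polar (perp (polarBilin Q) hi.polar T) := h
    rwa [perp_perp _ (polar_symm Q) hn] at h1

lemma finrank_red [FiniteDimensional K M] {Q : QuadraticForm K M} (hi : QInv G Q)
    (hn : ND (polarBilin Q)) (T : Submodule (MonoidAlgebra K G) M)
    (hTP : T ≤ perp (polarBilin Q) hi.polar T) :
    Module.finrank K (SQ T (perp (polarBilin Q) hi.polar T)) + 2 * Module.finrank K T =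
      Module.finrank K M := by
  have h1 := finrank_perp hi.polar (polar_symm Q) hn T
  have := finiteDim_sub (K := K) (perp (polarBilin Q) hi.polar T)
  have h2 := finrank_quot (K := K) (T.comap (perp (polarBilin Q) hi.polar T).subtype)
  have h3 : Module.finrank K (T.comap (perp (polarBilin Q) hi.polar T).subtype) =
      Module.finrank K T :=
    ((Submodule.comapSubtypeEquivOfLe hTP).restrictScalars K).finrank_eq
  unfold SQ
  omega

/-- dichotomy for a simple submodule -/
lemma simple_dich {Q : QuadraticForm K M} (hi : QInv G Q) (T : Submodule (MonoidAlgebra K G) M)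
    [IsSimpleModule (MonoidAlgebra K G) T] :
    T ⊓ perp (polarBilin Q) hi.polar T = ⊥ ∨ T ≤ perp (polarBilin Q) hi.polar T := by
  have hT : IsAtom T := isSimpleModule_iff_isAtom.1 inferInstance
  rcases hT.le_iff.1 (inf_le_left : T ⊓ perp (polarBilin Q) hi.polar T ≤ T) with h | h
  · exact Or.inl h
  · exact Or.inr (inf_eq_left.1 h)

end red
end QS

set_option linter.unusedSectionVars false

namespace QS
section even
universe u
variable {K G : Type*} [Field K] [Group G]

lemma mult_three {M : Type*} [AddCommGroup M] [Module K M] [Module (MonoidAlgebra K G) M]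
    [IsScalarTower K (MonoidAlgebra K G) M] [FiniteDimensional K M]
    (S : Type*) [AddCommGroup S] [Module (MonoidAlgebra K G) S]
    {T P : Submodule (MonoidAlgebra K G) M} (h : T ≤ P) :
    mult (MonoidAlgebra K G) S M = mult (MonoidAlgebra K G) S T +
      mult (MonoidAlgebra K G) S (SQ T P) + mult (MonoidAlgebra K G) S (M ⧸ P) := by
  have := noeth K (G := G) (M := M)
  have := artin K (G := G) (M := M)
  rw [mult_add S P, mult_add S (T.comap P.subtype),
    mult_congr S (Submodule.comapSubtypeEquivOfLe h)]

lemma exists_simple_sub {M : Type*} [AddCommGroup M] [Module K M] [Module (MonoidAlgebra K G) M]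
    [IsScalarTower K (MonoidAlgebra K G) M] [FiniteDimensional K M]
    (N : Submodule (MonoidAlgebra K G) M) (hN : N ≠ ⊥) :
    ∃ T ≤ N, IsSimpleModule (MonoidAlgebra K G) T := by
  have := artin K (G := G) (M := M)
  obtain h | ⟨T, hT, hTN⟩ := eq_bot_or_exists_atom_le N
  · exact absurd h hN
  · exact ⟨T, hTN, isSimpleModule_iff_isAtom.2 hT⟩

lemma finrank_split {M : Type*} [AddCommGroup M] [Module K M] [Module (MonoidAlgebra K G) M]
    [IsScalarTower K (MonoidAlgebra K G) M] [FiniteDimensional K M] {A B : Submodule (MonoidAlgebra K G) M} (h : IsCompl A B) :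
    Module.finrank K A + Module.finrank K B = Module.finrank K M := by
  have h1 := finrank_quot (K := K) A
  rw [((Submodule.quotientEquivOfIsCompl A B h).restrictScalars K).finrank_eq] at h1
  omega

lemma even_of_form_aux (h2 : (2 : K) ≠ 0) (n : ℕ) : ∀ (M : Type u) [AddCommGroup M] [Module K M]
    [Module (MonoidAlgebra K G) M] [IsScalarTower K (MonoidAlgebra K G) M]
    [FiniteDimensional K M] (Q : QuadraticForm K M), QInv G Q → ND (polarBilin Q) →
    (∀ (Y : Type u) [AddCommGroup Y] [Module K Y]
      [Module (MonoidAlgebra K G) Y] [IsScalarTower K (MonoidAlgebra K G) Y]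
      [FiniteDimensional K Y] [IsSimpleModule (MonoidAlgebra K G) Y],
      mult (MonoidAlgebra K G) Y M ≠ 0 → (∃ q : QuadraticForm K Y, q ≠ 0 ∧ QInv G q) →
      Even (Module.finrank K Y)) →
    Module.finrank K M = n → Even (Module.finrank K M) := by
  induction n using Nat.strong_induction_on with
  | _ n ih =>
  intro M _ _ _ _ _ Q hi hn hP hfr
  by_cases htriv : (⊤ : Submodule (MonoidAlgebra K G) M) = ⊥
  · have : Subsingleton M := (Submodule.subsingleton_iff (MonoidAlgebra K G)).1
      (subsingleton_of_bot_eq_top htriv.symm)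
    rw [Module.finrank_zero_of_subsingleton]
    exact Even.zero
  obtain ⟨T, -, hTs⟩ := exists_simple_sub (K := K) _ htriv
  have := noeth K (G := G) (M := M)
  have := artin K (G := G) (M := M)
  have := finiteDim_sub (K := K) T
  have : Nontrivial T := IsSimpleModule.nontrivial (MonoidAlgebra K G) T
  have hTpos : 0 < Module.finrank K T := Module.finrank_pos
  rcases simple_dich hi T with h | h
  · have hc := isCompl_perp hi.polar (polar_symm Q) hn T h
    have hsum := finrank_split (K := K) hc
    have hTe : Even (Module.finrank K T) := by
      refine hP T (mult_ne_zero_of_surj T T LinearMap.id Function.surjective_id)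
        ⟨resQ Q T, ?_, resQ_inv hi T⟩
      intro h0
      have hnd := resQ_ND hi T h
      obtain ⟨x, hx⟩ := exists_ne (0 : T)
      exact hx (hnd x fun y => by rw [h0]; simp [QuadraticMap.polar])
    have hPe : Even (Module.finrank K (perp (polarBilin Q) hi.polar T)) := by
      have := finiteDim_sub (K := K) (perp (polarBilin Q) hi.polar T)
      refine ih _ (by omega) _ (resQ Q _) (resQ_inv hi _) (resQ_ND_perp hi hn T h) ?_ rfl
      intro Y _ _ _ _ _ _ hY hq
      exact hP Y (by rw [mult_split (K := K) Y hc]; omega) hq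
    rw [← hsum]
    exact hTe.add hPe
  · have hT0 : ∀ x ∈ T, Q x = 0 := by
      intro x hx
      have h3 : polarBilin Q x x = 0 := h hx x hx
      rw [polarBilin_apply_apply, QuadraticMap.polar_self] at h3
      simpa [h2] using h3
    obtain ⟨Q', -, hi', hn'⟩ := red hi hn T hT0
    have hsum := finrank_red hi hn T h
    have := finiteDim_sub (K := K) (perp (polarBilin Q) hi.polar T)
    have := finiteDim_quot (K := K) (T.comap (perp (polarBilin Q) hi.polar T).subtype)
    have hPe : Even (Module.finrank K (SQ T (perp (polarBilin Q) hi.polar T))) := by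
      refine ih _ (by omega) _ Q' hi' hn' ?_ rfl
      intro Y _ _ _ _ _ _ hY hq
      exact hP Y (by rw [mult_three (K := K) Y h]; omega) hq
    rw [← hsum]
    exact hPe.add (even_two_mul _)

end even
end QS

set_option linter.unusedSectionVars false

namespace QS
section lin

lemma sum_quad {k : Type*} [Field k] [Finite k] (h2 : (2 : k) ≠ 0) (r a : k) (hr : r ≠ 0) :
    ∃ p q : k, p ^ 2 + r * q ^ 2 = a := by
  have := Fintype.ofFinite k
  have hc : Fintype.card k % 2 = 1 := by
    apply FiniteField.odd_card_of_char_ne_two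
    intro h
    apply h2
    have := ringChar.Nat.cast_ringChar (R := k)
    rw [h] at this
    exact_mod_cast this
  obtain ⟨p, q, h⟩ := FiniteField.exists_root_sum_quadratic
    (f := (Polynomial.X ^ 2 - Polynomial.C a : Polynomial k))
    (g := (Polynomial.C r * Polynomial.X ^ 2 : Polynomial k))
    (Polynomial.degree_X_pow_sub_C (by norm_num) a) (Polynomial.degree_C_mul_X_pow 2 hr) hc
  refine ⟨p, q, ?_⟩
  simp at h
  linear_combination h

lemma similitude {k W : Type*} [Field k] [Finite k] (h2 : (2 : k) ≠ 0) [AddCommGroup W] [Module k W]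
    [FiniteDimensional k W] (he : Even (Module.finrank k W)) (b : LinearMap.BilinForm k W)
    (hs : ∀ x y, b x y = b y x) (hn : ND b) (a : k) :
    ∃ f : W →ₗ[k] W, ∀ x, b (f x) (f x) = a * b x x := by
  obtain ⟨m, hm⟩ := he
  have : Invertible (2 : k) := invertibleOfNonzero h2
  obtain ⟨v0, hv0⟩ := LinearMap.BilinForm.exists_orthogonal_basis (B := b) ⟨hs⟩
  let e : Fin (Module.finrank k W) ≃ Fin m ⊕ Fin m := (finCongr hm).trans finSumFinEquiv.symm
  let v := v0.reindex e
  have hv : ∀ i j, i ≠ j → b (v i) (v j) = 0 := by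
    intro i j hij
    have := hv0 (i := e.symm i) (j := e.symm j) (by simpa using hij)
    simpa [v] using this
  have hu : ∀ i, b (v i) (v i) ≠ 0 := by
    intro i hi
    apply v.ne_zero i
    apply hn
    have : b (v i) = 0 := by
      apply v.ext
      intro j
      by_cases hij : i = j
      · subst hij; simpa using hi
      · simpa using hv i j hij
    intro y; rw [this]; rfl
  clear_value v
  have hpq : ∀ i : Fin m, ∃ p q : k, p ^ 2 + (b (v (.inr i)) (v (.inr i)) / b (v (.inl i)) (v (.inl i))) * q ^ 2 = a :=
    fun i => sum_quad h2 _ a (div_ne_zero (hu _) (hu _))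
  choose p q hpq using hpq
  let f : W →ₗ[k] W := v.constr k (Sum.elim (fun i => p i • v (.inl i) + q i • v (.inr i))
    (fun i => -((b (v (.inr i)) (v (.inr i)) / b (v (.inl i)) (v (.inl i))) * q i) • v (.inl i) + p i • v (.inr i)))
  have hfl : ∀ i, f (v (.inl i)) = p i • v (.inl i) + q i • v (.inr i) := fun i => by
    simp [f]
  have hfr : ∀ i, f (v (.inr i)) = -((b (v (.inr i)) (v (.inr i)) / b (v (.inl i)) (v (.inl i))) * q i) • v (.inl i) + p i • v (.inr i) := fun i => by
    simp [f]
  clear_value f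
  refine ⟨f, ?_⟩
  have key : b.compl₁₂ f f = a • b := by
    apply LinearMap.BilinForm.ext_basis v
    intro i j
    have hu' := hu
    rcases i with i | i <;> rcases j with j | j <;>
      simp only [LinearMap.compl₁₂_apply, LinearMap.smul_apply, hfl, hfr, map_add, map_smul, LinearMap.add_apply, smul_eq_mul]
    · by_cases hij : i = j
      · subst hij
        rw [hv (.inl i) (.inr i) (by simp), hv (.inr i) (.inl i) (by simp), ← hpq i]
        have := hu (.inl i)
        field_simp
        ring
      · rw [hv (.inl i) (.inl j) (by simpa), hv (.inr i) (.inr j) (by simpa), hv (.inr i) (.inl j) (by simp), hv (.inl i) (.inr j) (by simp)]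
        ring
    · by_cases hij : i = j
      · subst hij
        rw [hv (.inl i) (.inr i) (by simp), hv (.inr i) (.inl i) (by simp)]
        have := hu (.inl i)
        field_simp
        ring
      · rw [hv (.inl i) (.inl j) (by simpa), hv (.inr i) (.inr j) (by simpa), hv (.inr i) (.inl j) (by simp), hv (.inl i) (.inr j) (by simp)]
        ring
    · by_cases hij : i = j
      · subst hij
        rw [hv (.inl i) (.inr i) (by simp), hv (.inr i) (.inl i) (by simp)]
        have := hu (.inl i)
        field_simp
        ring
      · rw [hv (.inl i) (.inl j) (by simpa), hv (.inr i) (.inr j) (by simpa), hv (.inr i) (.inl j) (by simp), hv (.inl i) (.inr j) (by simp)]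
        ring
    · by_cases hij : i = j
      · subst hij
        rw [hv (.inl i) (.inr i) (by simp), hv (.inr i) (.inl i) (by simp), ← hpq i]
        have := hu (.inl i)
        field_simp
        ring
      · rw [hv (.inl i) (.inl j) (by simpa), hv (.inr i) (.inr j) (by simpa), hv (.inr i) (.inl j) (by simp), hv (.inl i) (.inr j) (by simp)]
        ring
  intro x
  have := LinearMap.congr_fun₂ key x x
  simpa using this

/-- Transfer of a `K`-bilinear form self-adjoint for `k` to a `k`-bilinear form via the trace. -/
lemma exists_trace_form {K k S : Type*} [Field K] [Finite K] [Field k] [Finite k] [Algebra K k]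
    [AddCommGroup S] [Module K S] [Module k S] [IsScalarTower K k S]
    (B : LinearMap.BilinForm K S) (hB : ∀ (c : k) x y, B (c • x) y = B x (c • y)) :
    ∃ b : LinearMap.BilinForm k S, ∀ (c : k) x y, Algebra.trace K k (c * b x y) = B (c • x) y := by
  have hnd := traceForm_nondegenerate K k
  have hex : ∀ x y, ∃ z : k, ∀ c, Algebra.trace K k (c * z) = B (c • x) y := by
    intro x y
    let l : k →ₗ[K] K := (B.flip y).comp ((LinearMap.toSpanSingleton k S x).restrictScalars K)
    refine ⟨((Algebra.traceForm K k).toDual hnd).symm l, fun c => ?_⟩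
    have := LinearMap.BilinForm.apply_toDual_symm_apply (hB := hnd) l c
    rw [mul_comm]
    rw [Algebra.traceForm_apply] at this
    exact this
  choose z hz using hex
  have uniq : ∀ s t : k, (∀ c, Algebra.trace K k (c * s) = Algebra.trace K k (c * t)) → s = t := by
    intro s t h
    rw [← sub_eq_zero]
    apply hnd.2
    intro c
    rw [Algebra.traceForm_apply, mul_sub, map_sub, h, sub_self]
  refine ⟨LinearMap.mk₂ k z ?_ ?_ ?_ ?_, fun c x y => hz x y c⟩
  · intro x x' y
    apply uniq
    intro c
    simp [mul_add, hz]
  · intro d x y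
    apply uniq
    intro c
    rw [hz, smul_eq_mul, ← mul_assoc, hz, mul_smul]
  · intro x y y'
    apply uniq
    intro c
    simp [mul_add, hz]
  · intro d x y
    apply uniq
    intro c
    rw [hz, smul_eq_mul, ← mul_assoc, hz, mul_smul, hB, hB, hB, smul_comm]

lemma trace_uniq {K k : Type*} [Field K] [Finite K] [Field k] [Finite k] [Algebra K k] (s t : k)
    (h : ∀ c, Algebra.trace K k (c * s) = Algebra.trace K k (c * t)) : s = t := by
  have hnd := traceForm_nondegenerate K k
  rw [← sub_eq_zero]
  apply hnd.2
  intro c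
  rw [Algebra.traceForm_apply, mul_sub, map_sub, h, sub_self]

end lin
end QS

set_option linter.unusedSectionVars false

namespace QS
section good
universe u

lemma exists_norm {k : Type*} [Field k] [Finite k] (σ : k →+* k) (hσ : ∀ c, σ (σ c) = c) (a : k)
    (ha : a ≠ 0) (hσa : σ a = a) : ((∀ c, σ c = c) ∧ (2 : k) ≠ 0) ∨ ∃ c, a * c * σ c = -1 := by
  by_cases h2 : (2 : k) = 0
  · right
    have hch : ringChar k = 2 := by
      have := Fintype.ofFinite k
      by_contra h
      exact Ring.two_ne_zero h h2
    obtain ⟨d, hd⟩ := FiniteField.isSquare_of_char_two hch (-a⁻¹)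
    have hneg : ∀ x : k, -x = x := fun x => by linear_combination -x * h2
    have hsd : σ d = d := by
      have h1 : σ d * σ d = d * d := by rw [← map_mul, ← hd, map_neg, map_inv₀, hσa]
      rcases mul_self_eq_mul_self_iff.1 h1 with h | h
      · exact h
      · rw [h, hneg]
    refine ⟨d, ?_⟩
    rw [hsd, mul_assoc, ← hd]
    field_simp
  · by_cases hid : ∀ c, σ c = c
    · exact Or.inl ⟨hid, h2⟩
    · right
      push Not at hid
      obtain ⟨x, hx⟩ := hid
      let E : Subfield k := RingHom.eqLocusField σ (RingHom.id k)
      let u := x - σ x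
      have hu : u ≠ 0 := sub_ne_zero.2 (Ne.symm hx)
      have hsu : σ u = -u := by simp [u, hσ]
      have h2E : (2 : E) ≠ 0 := by
        intro h
        apply h2
        have := congrArg E.subtype h
        rwa [map_ofNat, map_zero] at this
      have hrE : -u ^ 2 ∈ E := by
        show σ (-u^2) = -u^2
        simp [hsu]
      have haE : -a⁻¹ ∈ E := by
        show σ (-a⁻¹) = -a⁻¹
        simp [hσa]
      obtain ⟨s, t, hst⟩ := sum_quad h2E (⟨-u ^ 2, hrE⟩ : E) ⟨-a⁻¹, haE⟩ (by
        intro h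
        have := congrArg (fun z : E => (z : k)) h
        simp at this
        exact hu this)
      have hst' : (s : k) ^ 2 + (-u ^ 2) * (t : k) ^ 2 = -a⁻¹ := congrArg (fun z : E => (z : k)) hst
      have hs : σ s = s := s.2
      have ht : σ t = t := t.2
      refine ⟨s + t * u, ?_⟩
      rw [map_add, map_mul, hs, ht, hsu]
      have : a * (s + t * u) * (s + t * -u) = a * ((s : k) ^ 2 + (-u ^ 2) * (t : k) ^ 2) := by ring
      rw [this, hst']
      field_simp

variable {K G : Type*} [Field K] [Group G]

variable (K G) in
/-- the local conditions on a simple module -/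
def Good (S : Type u) [AddCommGroup S] [Module K S] [Module (MonoidAlgebra K G) S] : Prop :=
  (∀ q : QuadraticForm K S, QInv G q → (∀ x y, polar q x y = 0) → q = 0) ∧
  ((2 : K) ≠ 0 → ∀ (k : Type u) [Field k] [Finite k] [Algebra K k] [Module k S]
    [IsScalarTower K k S], (∀ (c : k) (g : G) (x : S), c • ga K g • x = ga K g • c • x) →
    ∀ b : LinearMap.BilinForm k S, (∀ x y, b x y = b y x) → ND b →
    (∀ (g : G) (x y : S), b (ga K g • x) (ga K g • y) = b x y) → Even (Module.finrank k S))

lemma exists_k [Finite K] (S : Type u) [AddCommGroup S] [Module K S] [Module (MonoidAlgebra K G) S]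
    [IsScalarTower K (MonoidAlgebra K G) S] [FiniteDimensional K S]
    [IsSimpleModule (MonoidAlgebra K G) S] :
    ∃ (k : Type u) (_ : Field k) (_ : Finite k) (_ : Algebra K k) (_ : Module k S)
      (_ : IsScalarTower K k S), (∀ (c : k) (g : G) (x : S), c • ga K g • x = ga K g • c • x) ∧
      (∀ f : S →ₗ[MonoidAlgebra K G] S, ∃ c : k, ∀ x, f x = c • x) := by
  classical
  have : Finite S := Module.finite_of_finite K
  have hfin : Finite (Module.End (MonoidAlgebra K G) S) :=
    Finite.of_injective (fun f => (f : S → S)) DFunLike.coe_injective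
  have : SMulCommClass (MonoidAlgebra K G) K S := IsScalarTower.to_smulCommClass'
  refine ⟨Module.End (MonoidAlgebra K G) S, littleWedderburn _, hfin,
    Module.End.instAlgebra K (MonoidAlgebra K G) S, Module.End.applyModule, ?_, ?_, ?_⟩
  · exact ⟨fun a f x => rfl⟩
  · intro c g x
    exact c.map_smul _ _
  · intro f
    exact ⟨f, fun x => rfl⟩

lemma neg_sim [Finite K] {S : Type u} [AddCommGroup S] [Module K S] [Module (MonoidAlgebra K G) S]
    [IsScalarTower K (MonoidAlgebra K G) S] [FiniteDimensional K S]
    [IsSimpleModule (MonoidAlgebra K G) S] (hG : Good K G S) (q1 q2 : QuadraticForm K S)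
    (hi1 : QInv G q1) (hi2 : QInv G q2) (hn1 : ND (polarBilin q1)) (hn2 : ND (polarBilin q2)) :
    ∃ f : S →ₗ[K] S, ∀ x, q2 (f x) = - q1 x := by
  obtain ⟨k, _, _, _, _, _, hc, hk⟩ := exists_k (K := K) (G := G) S
  have hnt : Nontrivial S := IsSimpleModule.nontrivial (MonoidAlgebra K G) S
  have huniq : ∀ c d : k, (∀ x : S, c • x = d • x) → c = d := by
    intro c d h
    obtain ⟨x, hx⟩ := exists_ne (0 : S)
    exact smul_left_injective k hx (h x)
  let lm : k → S →ₗ[K] S := fun c =>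
    { toFun := fun x => c • x, map_add' := smul_add c, map_smul' := fun r x => smul_comm c r x }
  let lin : k → S →ₗ[MonoidAlgebra K G] S := fun c =>
    MonoidAlgebra.equivariantOfLinearOfComm (lm c) (fun g v => hc c g v)
  have lin_apply : ∀ c x, lin c x = c • x := fun c x => rfl
  set B1 := polarBilin q1 with hB1
  set B2 := polarBilin q2 with hB2
  have s1 : ∀ x y, B1 x y = B1 y x := polar_symm q1
  have s2 : ∀ x y, B2 x y = B2 y x := polar_symm q2
  have hadj : ∀ c : k, ∃ c' : k, ∀ x y, B1 (c' • x) y = B1 x (c • y) := by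
    intro c
    obtain ⟨p', hp'⟩ := exists_adjoint hi1.polar hn1 hi1.polar (lin c)
    obtain ⟨c', hc'⟩ := hk p'
    refine ⟨c', fun x y => ?_⟩
    rw [← hc', hp', lin_apply]
  choose τ hτ using hadj
  have B1u : ∀ c d : k, (∀ x y, B1 (c • x) y = B1 (d • x) y) → c = d := by
    intro c d h
    apply huniq
    intro x
    rw [← sub_eq_zero]
    apply hn1
    intro y
    rw [map_sub, LinearMap.sub_apply, h, sub_self]
  let σ : k →+* k :=
    { toFun := τ
      map_one' := by apply B1u; intro x y; rw [hτ, one_smul, one_smul]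
      map_mul' := by intro c d; apply B1u; intro x y; rw [hτ, mul_smul, mul_comm, mul_smul, hτ, hτ]
      map_zero' := by apply B1u; intro x y; rw [hτ, zero_smul, zero_smul]; simp
      map_add' := by intro c d; apply B1u; intro x y; rw [hτ, add_smul, add_smul, map_add, map_add, LinearMap.add_apply, hτ, hτ] }
  have hσ : ∀ c x y, B1 (σ c • x) y = B1 x (c • y) := hτ
  clear_value σ
  have hσσ : ∀ c, σ (σ c) = c := by
    intro c; apply B1u; intro x y
    rw [hσ, s1, hσ, s1]
  obtain ⟨p', hp'⟩ := exists_adjoint hi1.polar hn1 hi2.polar (LinearMap.id (R := MonoidAlgebra K G) (M := S))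
  obtain ⟨a, ha⟩ := hk p'
  have haB : ∀ x y, B1 (a • x) y = B2 x y := by
    intro x y; rw [← ha, hp']; rfl
  have hσa : σ a = a := by
    apply B1u; intro x y
    rw [hσ, s1, haB, haB, s2]
  have ha0 : a ≠ 0 := by
    rintro rfl
    obtain ⟨x, hx⟩ := exists_ne (0 : S)
    apply hx
    apply hn2
    intro y
    change B2 x y = 0
    rw [← haB, zero_smul]; simp
  rcases exists_norm σ hσσ a ha0 hσa with ⟨hid, h2⟩ | ⟨c, hcn⟩
  · obtain ⟨b, hb⟩ := exists_trace_form (k := k) B1 (fun c x y => by rw [← hσ, hid])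
    have hbs : ∀ x y, b x y = b y x := by
      intro x y
      apply trace_uniq (K := K)
      intro c
      rw [hb, hb, s1, ← hσ, hid]
    have hbn : ND b := by
      intro x hx
      apply hn1
      intro y
      have := hb 1 x y
      rw [hx y, one_smul] at this
      change B1 x y = 0
      rw [← this]; simp
    have hbi : ∀ (g : G) (x y : S), b (ga K g • x) (ga K g • y) = b x y := by
      intro g x y
      apply trace_uniq (K := K)
      intro c
      rw [hb, hb, hc, hi1.polar g]
    have h2K : (2 : K) ≠ 0 := by
      intro h
      apply h2
      have := congrArg (algebraMap K k) h
      rwa [map_ofNat, map_zero] at this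
    have : FiniteDimensional k S := Module.Finite.of_restrictScalars_finite K k S
    obtain ⟨f, hf⟩ := similitude h2 (hG.2 h2K k hc b hbs hbn hbi) b hbs hbn (-a⁻¹)
    refine ⟨f.restrictScalars K, fun x => ?_⟩
    have e1 : B2 (f x) (f x) = - B1 x x := by
      rw [← haB, ← hb, hf]
      have h3 : a * (-a⁻¹ * b x x) = -(1 * b x x) := by field_simp
      rw [h3, map_neg, hb, one_smul]
    simp only [hB1, hB2, polarBilin_apply_apply, QuadraticMap.polar_self, nsmul_eq_mul] at e1
    apply mul_left_cancel₀ h2K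
    simp only [LinearMap.coe_restrictScalars]
    simp at e1
    linear_combination e1
  · refine ⟨lm c, fun x => ?_⟩
    have h0 : q1 + q2.comp (lm c) = 0 := by
      apply hG.1
      · intro g x
        have := hi2 g (c • x)
        have h3 := hi1 g x
        rw [← hc] at this
        change q1 (ga K g • x) + q2 (c • ga K g • x) = q1 x + q2 (c • x)
        rw [this, h3]
      · intro x y
        have e1 : polar (q1 + q2.comp (lm c)) x y = B1 x y + B2 (c • x) (c • y) := by
          simp only [hB1, hB2, polarBilin_apply_apply, QuadraticMap.polar, ← smul_add]
          simp [lm]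
          ring
        rw [e1, ← haB, ← hσ, smul_smul, smul_smul, show σ c * a * c = a * c * σ c by ring, hcn]
        simp
    have := congrArg (fun q : QuadraticForm K S => q x) h0
    simp at this
    linear_combination this
end good
end QS

set_option linter.unusedSectionVars false

namespace QS
section core
universe u

lemma mult_prod {R : Type*} [Ring R] (S : Type*) [AddCommGroup S] [Module R S]
    (M N : Type*) [AddCommGroup M] [Module R M] [AddCommGroup N] [Module R N]
    [IsNoetherian R M] [IsArtinian R M] [IsNoetherian R N] [IsArtinian R N] :
    mult R S (M × N) = mult R S M + mult R S N := by
  rw [mult_add S (LinearMap.ker (LinearMap.snd R M N)),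
    mult_congr S ((LinearMap.snd R M N).quotKerEquivOfSurjective LinearMap.snd_surjective)]
  congr 1
  rw [LinearMap.ker_snd]
  exact (mult_congr S (LinearEquiv.ofInjective (LinearMap.inl R M N) LinearMap.inl_injective)).symm

lemma finrank_comap_surj {K V W : Type*} [Field K] [AddCommGroup V] [Module K V] [AddCommGroup W]
    [Module K W] [FiniteDimensional K V] (g : V →ₗ[K] W) (hg : Function.Surjective g)
    (L : Submodule K W) :
    Module.finrank K (L.comap g) + Module.finrank K W = Module.finrank K L + Module.finrank K V := by
  have h1 := LinearMap.finrank_range_add_finrank_ker (g.domRestrict (L.comap g))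
  have h2 := LinearMap.finrank_range_add_finrank_ker g
  rw [LinearMap.range_eq_top.2 hg, finrank_top] at h2
  rw [LinearMap.range_domRestrict, Submodule.map_comap_eq_of_surjective hg, LinearMap.ker_domRestrict] at h1
  have h3 : LinearMap.ker g ≤ L.comap g := by
    intro x hx
    rw [LinearMap.mem_ker] at hx
    simp [hx]
  have h4 := (Submodule.comapSubtypeEquivOfLe h3).finrank_eq
  rw [h4] at h1
  omega

variable {K G : Type*} [Field K] [Group G]

lemma perp_anti {M : Type*} [AddCommGroup M] [Module K M] [Module (MonoidAlgebra K G) M]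
    [IsScalarTower K (MonoidAlgebra K G) M] {B : LinearMap.BilinForm K M} (hB : BInv G B)
    {A C : Submodule (MonoidAlgebra K G) M} (h : A ≤ C) : perp B hB C ≤ perp B hB A :=
  fun _ hx y hy => hx y (h hy)

lemma mult_dual {M : Type*} [AddCommGroup M] [Module K M] [Module (MonoidAlgebra K G) M]
    [IsScalarTower K (MonoidAlgebra K G) M] [FiniteDimensional K M]
    {B : LinearMap.BilinForm K M} (hB : BInv G B) (hs : ∀ x y, B x y = B y x) (hn : ND B)
    (T : Submodule (MonoidAlgebra K G) M) [IsSimpleModule (MonoidAlgebra K G) T]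
    (S : Type*) [AddCommGroup S] [Module K S] [Module (MonoidAlgebra K G) S]
    [IsScalarTower K (MonoidAlgebra K G) S] [FiniteDimensional K S]
    [IsSimpleModule (MonoidAlgebra K G) S] (C : LinearMap.BilinForm K S) (hC : BInv G C)
    (hCs : ∀ x y, C x y = C y x) (hCn : ND C) :
    mult (MonoidAlgebra K G) S T = mult (MonoidAlgebra K G) S (M ⧸ perp B hB T) := by
  have hT : IsAtom T := isSimpleModule_iff_isAtom.1 inferInstance
  have hco : IsCoatom (perp B hB T) := by
    refine ⟨fun h => hT.1 ?_, fun N hN => ?_⟩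
    · rw [← perp_perp hB hs hn T, h, eq_bot_iff]
      intro x hx
      exact hn x fun y => hx y trivial
    · have h1 : perp B hB N ≤ T := by
        have := perp_anti hB hN.le
        rwa [perp_perp hB hs hn] at this
      rcases hT.le_iff.1 h1 with h | h
      · rw [← perp_perp hB hs hn N, h, eq_top_iff]
        intro x _ y hy
        rw [(Submodule.mem_bot _).1 hy]
        simp
      · rw [← h, perp_perp hB hs hn] at hN
        exact absurd hN (lt_irrefl _)
  have : IsSimpleModule (MonoidAlgebra K G) (M ⧸ perp B hB T) := isSimpleModule_iff_isCoatom.2 hco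
  rw [mult_of_simple, mult_of_simple]
  congr 1
  rw [eq_iff_iff]
  constructor
  · rintro ⟨e⟩
    obtain ⟨p, hp⟩ := exists_adjoint hC hCn hB (T.subtype ∘ₗ e.symm.toLinearMap)
    have hker : LinearMap.ker p = perp B hB T := by
      ext x
      rw [LinearMap.mem_ker, mem_perp]
      constructor
      · intro h y hy
        have := hp x (e ⟨y, hy⟩)
        rw [h] at this
        simpa using this.symm
      · intro h
        apply hCn
        intro y
        rw [hp]
        exact h _ (e.symm y).2
    have hsur : Function.Surjective p := by
      rcases LinearMap.surjective_or_eq_zero p with h | h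
      · exact h
      · exfalso
        apply hco.1
        rw [← hker, h, LinearMap.ker_zero]
    rw [← hker]
    exact ⟨p.quotKerEquivOfSurjective hsur⟩
  · rintro ⟨e⟩
    obtain ⟨p, hp⟩ := exists_adjoint hB hn hC (e.toLinearMap ∘ₗ (perp B hB T).mkQ)
    have hr : ∀ s, p s ∈ T := by
      intro s
      rw [← perp_perp hB hs hn T]
      intro y hy
      rw [hp]
      have : (perp B hB T).mkQ y = 0 := by
        rw [Submodule.mkQ_apply, Submodule.Quotient.mk_eq_zero]; exact hy
      rw [LinearMap.comp_apply, this]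
      simp
    have hinj : Function.Injective p := by
      rw [← LinearMap.ker_eq_bot, eq_bot_iff]
      intro s h
      rw [LinearMap.mem_ker] at h
      rw [Submodule.mem_bot]
      apply hCn
      intro y
      obtain ⟨x, hx⟩ := (perp B hB T).mkQ_surjective (e.symm y)
      have := hp s x
      rw [h, LinearMap.comp_apply, hx] at this
      simpa using this.symm
    let p' : S →ₗ[MonoidAlgebra K G] T := p.codRestrict T hr
    have hinj' : Function.Injective p' := fun a b h => hinj (congrArg Subtype.val h)
    have hsur : Function.Surjective p' := by
      rcases LinearMap.surjective_or_eq_zero p' with h | h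
      · exact h
      · exfalso
        have := IsSimpleModule.nontrivial (MonoidAlgebra K G) S
        obtain ⟨x, hx⟩ := exists_ne (0 : S)
        apply hx
        apply hinj'
        rw [h]; rfl
    exact ⟨(LinearEquiv.ofBijective p' ⟨hinj', hsur⟩).symm⟩

lemma exists_embed {M : Type*} [AddCommGroup M] [Module K M] [Module (MonoidAlgebra K G) M]
    [IsScalarTower K (MonoidAlgebra K G) M] [FiniteDimensional K M]
    {B : LinearMap.BilinForm K M} (hB : BInv G B)
    (hnd : ∀ (N : Submodule (MonoidAlgebra K G) M) (x : M), x ∈ N → (∀ y ∈ N, B x y = 0) → x = 0)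
    {S : Type*} [AddCommGroup S] [Module K S] [Module (MonoidAlgebra K G) S]
    [IsScalarTower K (MonoidAlgebra K G) S] {C : LinearMap.BilinForm K S} (hC : BInv G C)
    (hCn : ND C) (hne : mult (MonoidAlgebra K G) S M ≠ 0) :
    ∃ j : S →ₗ[MonoidAlgebra K G] M, Function.Injective j := by
  obtain ⟨A, N, -, ⟨e⟩⟩ := exists_of_mult_ne_zero _ hne
  have := finiteDim_sub (K := K) N
  let D : LinearMap.BilinForm K N :=
    B.compl₁₂ (N.subtype.restrictScalars K) (N.subtype.restrictScalars K)
  have hD : ∀ x y : N, D x y = B x y := fun x y => rfl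
  clear_value D
  have hDi : BInv G D := by
    intro g x y
    rw [hD, hD]
    exact hB g x y
  have hDn : ND D := by
    intro x hx
    apply Subtype.ext
    apply hnd N x x.2
    intro y hy
    have := hx ⟨y, hy⟩
    rw [hD] at this
    exact this
  let π : N →ₗ[MonoidAlgebra K G] SQ A N := (A.comap N.subtype).mkQ
  have hπ : Function.Surjective π := (A.comap N.subtype).mkQ_surjective
  clear_value π
  obtain ⟨p, hp⟩ := exists_adjoint hDi hDn hC (e.toLinearMap ∘ₗ π)
  refine ⟨N.subtype ∘ₗ p, N.subtype_injective.comp ?_⟩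
  rw [← LinearMap.ker_eq_bot, eq_bot_iff]
  intro s h
  rw [LinearMap.mem_ker] at h
  rw [Submodule.mem_bot]
  apply hCn
  intro y
  obtain ⟨x, hx⟩ := hπ (e.symm y)
  have := hp s x
  rw [h, LinearMap.comp_apply, hx] at this
  simpa using this.symm

lemma core [Finite K] (n : ℕ) : ∀ (M : Type u) [AddCommGroup M] [Module K M]
    [Module (MonoidAlgebra K G) M] [IsScalarTower K (MonoidAlgebra K G) M]
    [FiniteDimensional K M] (Q : QuadraticForm K M), QInv G Q → ND (polarBilin Q) →
    (∀ (S : Type u) [AddCommGroup S] [Module K S]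
      [Module (MonoidAlgebra K G) S] [IsScalarTower K (MonoidAlgebra K G) S]
      [FiniteDimensional K S] [IsSimpleModule (MonoidAlgebra K G) S],
      mult (MonoidAlgebra K G) S M ≠ 0 → Good K G S) →
    (∀ (S : Type u) [AddCommGroup S] [Module K S]
      [Module (MonoidAlgebra K G) S] [IsScalarTower K (MonoidAlgebra K G) S]
      [FiniteDimensional K S] [IsSimpleModule (MonoidAlgebra K G) S],
      (∃ C : LinearMap.BilinForm K S, BInv G C ∧ (∀ x y, C x y = C y x) ∧ ND C) →
      Even (mult (MonoidAlgebra K G) S M)) →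
    Module.finrank K M = n →
    ∃ L : Submodule K M, (∀ x ∈ L, Q x = 0) ∧ 2 * Module.finrank K L = Module.finrank K M := by
  induction n using Nat.strong_induction_on with
  | _ n ih =>
  intro M _ _ _ _ _ Q hi hn hG hE hfr
  have := noeth K (G := G) (M := M)
  have := artin K (G := G) (M := M)
  by_cases hz : ∃ T : Submodule (MonoidAlgebra K G) M, IsSimpleModule (MonoidAlgebra K G) T ∧
      T ≤ perp (polarBilin Q) hi.polar T
  · obtain ⟨T, hTs, hTP⟩ := hz
    have := finiteDim_sub (K := K) T
    have : Nontrivial T := IsSimpleModule.nontrivial (MonoidAlgebra K G) T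
    have hTpos : 0 < Module.finrank K T := Module.finrank_pos
    have hgT : Good K G T := hG T (mult_ne_zero_of_surj T T LinearMap.id Function.surjective_id)
    have hT0 : ∀ x ∈ T, Q x = 0 := by
      intro x hx
      have h0 : resQ Q T = 0 := hgT.1 _ (resQ_inv hi T) (fun x y => hTP x.2 y y.2)
      have := congrArg (fun q : QuadraticForm K T => q ⟨x, hx⟩) h0
      exact this
    have hred := red hi hn T hT0
    have hsum := finrank_red hi hn T hTP
    have hfp := finrank_perp hi.polar (polar_symm Q) hn T
    set P := perp (polarBilin Q) hi.polar T with hP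
    obtain ⟨Q', hQ', hi', hn'⟩ := hred
    have := finiteDim_sub (K := K) P
    have := finiteDim_quot (K := K) (T.comap P.subtype)
    obtain ⟨L', hL', hLf⟩ := ih _ (by omega) (SQ T P) Q' hi' hn' (by
        intro S _ _ _ _ _ _ hS
        exact hG S (by rw [mult_three (K := K) S hTP]; omega)) (by
        intro S _ _ _ _ _ _ hS
        have h1 := hE S hS
        obtain ⟨C, hC, hCs, hCn⟩ := hS
        rw [mult_three (K := K) S hTP, hP, ← mult_dual hi.polar (polar_symm Q) hn T S C hC hCs hCn,
          ← hP] at h1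
        obtain ⟨r, hr⟩ := h1
        exact ⟨r - mult (MonoidAlgebra K G) S T, by omega⟩) rfl
    let g : P →ₗ[K] SQ T P := (T.comap P.subtype).mkQ.restrictScalars K
    have hg : Function.Surjective g := (T.comap P.subtype).mkQ_surjective
    let L1 : Submodule K P := L'.comap g
    have hL1 := finrank_comap_surj g hg L'
    refine ⟨L1.map (P.subtype.restrictScalars K), ?_, ?_⟩
    · rintro x ⟨y, hy, rfl⟩
      have h3 : Q' (Submodule.Quotient.mk y) = 0 := hL' _ hy
      rw [hQ' y] at h3
      exact h3
    · have h5 : Module.finrank K (L1.map (P.subtype.restrictScalars K)) = Module.finrank K L1 :=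
        ((L1.equivMapOfInjective (P.subtype.restrictScalars K) (fun a b h => Subtype.ext h)).finrank_eq).symm 
      rw [h5]
      change 2 * Module.finrank K (L'.comap g) = _
      omega
  · push Not at hz
    have hnd : ∀ N : Submodule (MonoidAlgebra K G) M, N ⊓ perp (polarBilin Q) hi.polar N = ⊥ := by
      intro N
      by_contra hne
      obtain ⟨T, hT, hTs⟩ := exists_simple_sub (K := K) _ hne
      exact hz T hTs ((hT.trans inf_le_right).trans (perp_anti _ (hT.trans inf_le_left)))
    by_cases htriv : (⊤ : Submodule (MonoidAlgebra K G) M) = ⊥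
    · have : Subsingleton M := (Submodule.subsingleton_iff (MonoidAlgebra K G)).1
        (subsingleton_of_bot_eq_top htriv.symm)
      refine ⟨⊥, ?_, ?_⟩
      · intro x _
        rw [Subsingleton.elim x 0, map_zero]
      · rw [Module.finrank_zero_of_subsingleton (M := M), finrank_bot]
    obtain ⟨T, -, hTs⟩ := exists_simple_sub (K := K) _ htriv
    have := finiteDim_sub (K := K) T
    have : Nontrivial T := IsSimpleModule.nontrivial (MonoidAlgebra K G) T
    have hTpos : 0 < Module.finrank K T := Module.finrank_pos
    have hgT : Good K G T := hG T (mult_ne_zero_of_surj T T LinearMap.id Function.surjective_id)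
    have hTn := resQ_ND hi T (hnd T)
    have hTi := resQ_inv hi T
    have hcT := isCompl_perp hi.polar (polar_symm Q) hn T (hnd T)
    have hj : ∃ j : T →ₗ[MonoidAlgebra K G] M, Function.Injective j ∧
        ∀ t, j t ∈ perp (polarBilin Q) hi.polar T := by
      have hev := hE T ⟨_, hTi.polar, polar_symm _, hTn⟩
      rw [mult_split (K := K) T hcT, mult_of_simple (M := T) T, if_pos ⟨LinearEquiv.refl _ _⟩] at hev
      have hne : mult (MonoidAlgebra K G) T (perp (polarBilin Q) hi.polar T) ≠ 0 := by
        intro h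
        rw [h] at hev
        simp at hev
      set P := perp (polarBilin Q) hi.polar T with hP
      have := finiteDim_sub (K := K) P
      obtain ⟨j, hj⟩ := exists_embed (resQ_inv hi P).polar (by
        intro N x hxN hx
        have : (x : M) ∈ N.map P.subtype ⊓ perp (polarBilin Q) hi.polar (N.map P.subtype) := by
          refine ⟨⟨x, hxN, rfl⟩, ?_⟩
          rintro _ ⟨y, hy, rfl⟩
          exact hx y hy
        rw [hnd, Submodule.mem_bot] at this
        exact Subtype.ext this) hTi.polar hTn hne
      exact ⟨P.subtype ∘ₗ j, P.subtype_injective.comp hj, fun t => (j t).2⟩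
    obtain ⟨j, hjinj, hjP⟩ := hj
    let q2 : QuadraticForm K T := Q.comp (j.restrictScalars K)
    have hq2 : ∀ t, q2 t = Q (j t) := fun t => rfl
    have hi2 : QInv G q2 := by
      intro g x
      rw [hq2, hq2, map_smul, hi g]
    have hn2 : ND (polarBilin q2) := by
      intro x hx
      have : j x ∈ LinearMap.range j ⊓ perp (polarBilin Q) hi.polar (LinearMap.range j) := by
        refine ⟨⟨x, rfl⟩, ?_⟩
        rintro _ ⟨y, rfl⟩
        have := hx y
        simp only [polarBilin_apply_apply, QuadraticMap.polar, hq2, map_add] at this ⊢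
        exact this
      rw [hnd, Submodule.mem_bot] at this
      exact hjinj (by rw [this, map_zero])
    obtain ⟨f, hf⟩ := neg_sim hgT (resQ Q T) q2 hTi hi2 hTn hn2
    let h : T × T →ₗ[MonoidAlgebra K G] M := T.subtype.coprod j
    have hh : ∀ s t, h (s, t) = s + j t := fun s t => by simp [h]
    have hhinj : Function.Injective h := by
      rw [← LinearMap.ker_eq_bot, eq_bot_iff]
      rintro ⟨s, t⟩ hst
      rw [LinearMap.mem_ker, hh] at hst
      have h1 : j t = -(s : M) := by rw [eq_neg_iff_add_eq_zero, add_comm]; exact hst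
      have h2 : j t ∈ T ⊓ perp (polarBilin Q) hi.polar T :=
        ⟨by rw [h1]; exact T.neg_mem s.2, hjP t⟩
      rw [hnd, Submodule.mem_bot] at h2
      rw [h2, add_zero] at hst
      rw [Submodule.mem_bot, Prod.mk_eq_zero]
      exact ⟨Subtype.ext hst, hjinj (by rw [h2, map_zero])⟩
    clear_value h
    let W := LinearMap.range h
    have hW : ∀ x, h x ∈ W := fun x => ⟨x, rfl⟩
    let eW : (T × T) ≃ₗ[MonoidAlgebra K G] W := LinearEquiv.ofInjective h hhinj
    have hWf : Module.finrank K W = Module.finrank K T + Module.finrank K T := by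
      rw [← (eW.restrictScalars K).finrank_eq, Module.finrank_prod]
    have := noeth K (G := G) (M := T)
    have := artin K (G := G) (M := T)
    have hWm : ∀ (S : Type u) [AddCommGroup S] [Module (MonoidAlgebra K G) S],
        mult (MonoidAlgebra K G) S W = mult (MonoidAlgebra K G) S T + mult (MonoidAlgebra K G) S T := by
      intro S _ _
      rw [← mult_prod, mult_congr S eW]
    clear_value eW W
    have hcW := isCompl_perp hi.polar (polar_symm Q) hn W (hnd W)
    have hsum := finrank_split (K := K) hcW
    have hPn := resQ_ND_perp hi hn W (hnd W)
    have hms : ∀ (S : Type u) [AddCommGroup S] [Module (MonoidAlgebra K G) S],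
        _ := fun S _ _ => mult_split (K := K) S hcW
    set P := perp (polarBilin Q) hi.polar W with hP
    have := finiteDim_sub (K := K) P
    obtain ⟨L1, hL1, hLf⟩ := ih _ (by omega) P (resQ Q P) (resQ_inv hi P) hPn (by
        intro S _ _ _ _ _ _ hS
        exact hG S (by rw [hms]; omega)) (by
        intro S _ _ _ _ _ _ hS
        have h1 := hE S hS
        rw [hms, hWm] at h1
        obtain ⟨r, hr⟩ := h1
        exact ⟨r - mult (MonoidAlgebra K G) S T, by omega⟩) rfl
    let h0 : T →ₗ[K] M := (h.restrictScalars K) ∘ₗ (LinearMap.id.prod f)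
    have hh0 : ∀ t, h0 t = h (t, f t) := fun t => rfl
    have hh0inj : Function.Injective h0 := by
      intro a b hab
      exact congrArg Prod.fst (hhinj hab)
    let L2 : Submodule K M := L1.map (P.subtype.restrictScalars K)
    have hL2P : ∀ x ∈ L2, x ∈ P := by
      rintro _ ⟨y, -, rfl⟩
      exact y.2
    have hL2Q : ∀ x ∈ L2, Q x = 0 := by
      rintro _ ⟨y, hy, rfl⟩
      exact hL1 y hy
    have hL2f : Module.finrank K L2 = Module.finrank K L1 :=
      ((L1.equivMapOfInjective (P.subtype.restrictScalars K) (fun a b h => Subtype.ext h)).finrank_eq).symm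
    have hRf : Module.finrank K (LinearMap.range h0) = Module.finrank K T :=
      LinearMap.finrank_range_of_inj hh0inj
    have hRQ : ∀ x ∈ LinearMap.range h0, Q x = 0 := by
      rintro _ ⟨t, rfl⟩
      rw [hh0, hh, QuadraticMap.map_add Q]
      have h1 := hf t
      rw [hq2, resQ_apply] at h1
      have h2 : polar Q (t : M) (j (f t)) = 0 := by
        rw [QuadraticMap.polar_comm]
        exact hjP (f t) t t.2
      rw [h1, h2]
      ring
    have hRW : ∀ x ∈ LinearMap.range h0, x ∈ W := by
      rintro _ ⟨t, rfl⟩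
      exact hW _
    refine ⟨LinearMap.range h0 ⊔ L2, ?_, ?_⟩
    · intro x hx
      obtain ⟨y, hy, z, hz', rfl⟩ := Submodule.mem_sup.1 hx
      rw [QuadraticMap.map_add Q, hRQ y hy, hL2Q z hz', QuadraticMap.polar_comm]
      have : polar Q z y = 0 := hL2P z hz' y (hRW y hy)
      rw [this]; simp
    · have h6 := Submodule.finrank_sup_add_finrank_inf_eq (LinearMap.range h0) L2
      have h7 : LinearMap.range h0 ⊓ L2 = ⊥ := by
        rw [eq_bot_iff]
        rintro x ⟨hx1, hx2⟩
        have : x ∈ W ⊓ P := ⟨hRW x hx1, hL2P x hx2⟩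
        rw [hcW.inf_eq_bot] at this
        exact this
      rw [h7, finrank_bot] at h6
      omega

end core
end QS

set_option linter.unusedSectionVars false

namespace QS
section extract
variable {F V V' : Type*} [Field F] [AddCommGroup V] [Module F V] [FiniteDimensional F V]
  [AddCommGroup V'] [Module F V'] [FiniteDimensional F V']

lemma exists_hyp {V : Type*} [AddCommGroup V] [Module F V] (Q : QuadraticForm F V)
    (hn : ND (polarBilin Q)) (a : V) (ha : a ≠ 0) (hQ : Q a = 0) :
    ∃ v, polar Q a v = 1 ∧ Q v = 0 := by
  have : ∃ w, polar Q a w ≠ 0 := by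
    by_contra h
    push Not at h
    exact ha (hn a h)
  obtain ⟨w, hw⟩ := this
  let w' := (polar Q a w)⁻¹ • w
  have hw' : polar Q a w' = 1 := by
    simp only [w', QuadraticMap.polar_smul_right, smul_eq_mul]
    field_simp
  have haa : polar Q a a = 0 := by rw [QuadraticMap.polar_self, hQ]; simp
  clear_value w'
  refine ⟨w' + (- Q w') • a, ?_, ?_⟩
  · rw [QuadraticMap.polar_add_right, QuadraticMap.polar_smul_right, haa, hw']; simp
  · rw [QuadraticMap.map_add Q, QuadraticMap.map_smul, hQ, QuadraticMap.polar_smul_right,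
      QuadraticMap.polar_comm, hw']
    simp

lemma extract (Q : QuadraticForm F V) (Q' : QuadraticForm F V') (hn : ND (polarBilin Q))
    (hn' : ND (polarBilin Q')) (hd : Module.finrank F V = Module.finrank F V') (d : ℕ) :
    ∀ (L : Submodule F (V × V')), (∀ p ∈ L, Q p.1 = Q' p.2) →
      Module.finrank F L = Module.finrank F V →
      Module.finrank F (L.comap (LinearMap.inl F V V')) = d →
      ∃ φ : V ≃ₗ[F] V', ∀ x : V, Q' (φ x) = Q x := by
  induction d using Nat.strong_induction_on with
  | _ d ih =>
  intro L hL hLf hLd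
  have hB : ∀ p ∈ L, ∀ r ∈ L, polar Q p.1 r.1 = polar Q' p.2 r.2 := by
    intro p hp r hr
    simp only [QuadraticMap.polar]
    have := hL _ (L.add_mem hp hr)
    rw [Prod.fst_add, Prod.snd_add] at this
    rw [this, hL p hp, hL r hr]
  by_cases hA : ∀ x : V, (x, (0 : V')) ∈ L → x = 0
  · let s : L →ₗ[F] V' := (LinearMap.snd F V V').domRestrict L
    have hs : Function.Injective s := by
      rw [← LinearMap.ker_eq_bot, eq_bot_iff]
      rintro ⟨⟨x, y⟩, hxy⟩ h
      have hy : y = 0 := h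
      subst hy
      have := hA x hxy
      subst this
      rfl
    let e : L ≃ₗ[F] V' := LinearEquiv.ofInjectiveOfFinrankEq s hs (by omega)
    have he : ∀ y, (e.symm y).1.2 = y := fun y => e.apply_symm_apply y
    let ψ : V' →ₗ[F] V := (LinearMap.fst F V V').domRestrict L ∘ₗ e.symm.toLinearMap
    have hψQ : ∀ y, Q (ψ y) = Q' y := by
      intro y
      have := hL _ (e.symm y).2
      rw [he] at this
      exact this
    have hψ : Function.Injective ψ := by
      rw [← LinearMap.ker_eq_bot, eq_bot_iff]
      intro y hy
      rw [LinearMap.mem_ker] at hy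
      apply hn'
      intro z
      have : polar Q (ψ y) (ψ z) = polar Q' y z := by
        simp only [QuadraticMap.polar, ← map_add, hψQ]
      rw [polarBilin_apply_apply, ← this, hy]
      simp [QuadraticMap.polar]
    let ε : V' ≃ₗ[F] V := LinearEquiv.ofInjectiveOfFinrankEq ψ hψ hd.symm
    refine ⟨ε.symm, fun x => ?_⟩
    have h1 : ψ (ε.symm x) = x := ε.apply_symm_apply x
    rw [← hψQ, h1]
  · push Not at hA
    obtain ⟨a, haL, ha⟩ := hA
    have hA' : ∃ y : V', ((0 : V), y) ∈ L ∧ y ≠ 0 := by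
      by_contra hcon
      push Not at hcon
      let s : L →ₗ[F] V := (LinearMap.fst F V V').domRestrict L
      have hs : Function.Injective s := by
        rw [← LinearMap.ker_eq_bot, eq_bot_iff]
        rintro ⟨⟨x, y⟩, hxy⟩ h
        have hy : x = 0 := h
        subst hy
        have := hcon y hxy
        subst this
        rfl
      have hsur : Function.Surjective s :=
        (LinearEquiv.ofInjectiveOfFinrankEq s hs hLf).surjective
      apply ha
      apply hn
      intro x
      obtain ⟨p, rfl⟩ := hsur x
      have := hB _ haL p p.2
      rw [polarBilin_apply_apply]
      change polar Q a p.1.1 = 0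
      rw [this]
      simp [QuadraticMap.polar]
    obtain ⟨a', haL', ha'⟩ := hA'
    have hQa : Q a = 0 := by simpa using hL _ haL
    have hQa' : Q' a' = 0 := by simpa using (hL _ haL').symm
    obtain ⟨v, hv1, hv2⟩ := exists_hyp Q hn a ha hQa
    obtain ⟨v', hv1', hv2'⟩ := exists_hyp Q' hn' a' ha' hQa'
    let l : V × V' →ₗ[F] F := (polarBilin Q).flip v ∘ₗ LinearMap.fst F V V' -
      (polarBilin Q').flip v' ∘ₗ LinearMap.snd F V V'
    have hl : ∀ x y, l (x, y) = polar Q x v - polar Q' y v' := fun x y => rfl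
    clear_value l
    let L0 := L ⊓ LinearMap.ker l
    have hz' : polar Q' (0 : V') v' = 0 := by simp [QuadraticMap.polar]
    have hz : polar Q (0 : V) v = 0 := by simp [QuadraticMap.polar]
    have haL0 : (a, (0 : V')) ∉ L0 := by
      rintro ⟨-, h⟩
      rw [SetLike.mem_coe, LinearMap.mem_ker, hl, hv1, hz'] at h
      simp at h
    have huL : (v, v') ∉ L := by
      intro h
      have := hB _ haL _ h
      simp only [hv1, hz'] at this
      exact one_ne_zero this
    let L' := L0 ⊔ Submodule.span F {(v, v')}
    have hL' : ∀ p ∈ L', ∃ q ∈ L0, ∃ t : F, p = q + t • (v, v') := by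
      intro p hp
      obtain ⟨q, hq, r, hr, rfl⟩ := Submodule.mem_sup.1 hp
      obtain ⟨t, rfl⟩ := Submodule.mem_span_singleton.1 hr
      exact ⟨q, hq, t, rfl⟩
    have hsing : ∀ p ∈ L', Q p.1 = Q' p.2 := by
      intro p hp
      obtain ⟨⟨x, y⟩, hq, t, rfl⟩ := hL' p hp
      have h1 := hL _ hq.1
      have h2 := hq.2
      rw [SetLike.mem_coe, LinearMap.mem_ker, hl, sub_eq_zero] at h2
      simp only [Prod.smul_mk, Prod.mk_add_mk] at h1 ⊢
      rw [QuadraticMap.map_add Q, QuadraticMap.map_add Q', h1, QuadraticMap.polar_smul_right,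
        QuadraticMap.polar_smul_right, h2, QuadraticMap.map_smul, QuadraticMap.map_smul, hv2, hv2']
    have hfr0 : Module.finrank F L0 + 1 = Module.finrank F L := by
      have h1 := LinearMap.finrank_range_add_finrank_ker (l.domRestrict L)
      have h2 : LinearMap.range (l.domRestrict L) = ⊤ := by
        rw [LinearMap.range_eq_top]
        intro c
        refine ⟨c • ⟨_, haL⟩, ?_⟩
        rw [map_smul, LinearMap.domRestrict_apply, hl, hv1, hz']
        simp
      rw [h2, finrank_top, Module.finrank_self, LinearMap.ker_domRestrict] at h1
      have h3 : Module.finrank F L0 = Module.finrank F ((LinearMap.ker l).comap L.subtype) := by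
        have : L0 = ((LinearMap.ker l).comap L.subtype).map L.subtype := by
          rw [Submodule.map_comap_subtype]
        rw [this]
        exact (Submodule.equivMapOfInjective L.subtype L.subtype_injective _).finrank_eq.symm
      omega
    have hu0 : (v, v') ≠ (0 : V × V') := fun h => huL (h ▸ L.zero_mem)
    have hfr : Module.finrank F L' = Module.finrank F V := by
      have h1 := Submodule.finrank_sup_add_finrank_inf_eq L0 (Submodule.span F {(v, v')})
      have h2 : L0 ⊓ Submodule.span F {(v, v')} = ⊥ := by
        rw [eq_bot_iff]
        rintro p ⟨hp1, hp2⟩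
        obtain ⟨t, rfl⟩ := Submodule.mem_span_singleton.1 hp2
        by_cases ht : t = 0
        · subst ht; simp
        · exfalso
          apply huL
          have := L.smul_mem t⁻¹ hp1.1
          rwa [smul_smul, inv_mul_cancel₀ ht, one_smul] at this
      rw [h2, finrank_bot, finrank_span_singleton hu0] at h1
      change Module.finrank F (L0 ⊔ Submodule.span F {(v, v')} : Submodule F (V × V')) = _
      omega
    have hcomp : ∀ x, (x, (0 : V')) ∈ L' → (x, (0 : V')) ∈ L0 := by
      intro x hx
      obtain ⟨⟨x0, y0⟩, hq, t, ht⟩ := hL' _ hx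
      have h1 := hB _ haL' _ hq.1
      simp only [Prod.smul_mk, Prod.mk_add_mk, Prod.mk.injEq] at ht h1
      have hy0 : y0 = (-t) • v' := by
        rw [neg_smul, eq_neg_iff_add_eq_zero]; exact ht.2.symm
      rw [hy0, QuadraticMap.polar_smul_right, hv1'] at h1
      have h2 : polar Q 0 x0 = 0 := by simp [QuadraticMap.polar]
      rw [h2] at h1
      have ht0 : t = 0 := by simpa using h1.symm
      subst ht0
      have h3 : y0 = 0 := by simpa using hy0
      have h4 : x = x0 := by simpa using ht.1
      rw [h4, ← h3]
      exact hq
    refine ih _ ?_ L' hsing hfr rfl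
    rw [← hLd]
    apply Submodule.finrank_lt_finrank_of_lt
    refine lt_of_le_of_ne ?_ ?_
    · intro x hx
      exact (hcomp x hx).1
    · intro heq
      have : a ∈ L.comap (LinearMap.inl F V V') := haL
      rw [← heq] at this
      exact haL0 (hcomp a this)

end extract
end QS

set_option linter.unusedSectionVars false

namespace QS
section bridge

lemma tele : ∀ (n : ℕ) (f : Fin (n + 1) → ℕ) (g : Fin n → ℕ), f 0 = 0 →
    (∀ i : Fin n, f i.succ = f i.castSucc + g i) → f (Fin.last n) = ∑ i, g i := by
  intro n
  induction n with
  | zero => intro f g h0 _; simpa using h0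
  | succ n ih =>
    intro f g h0 h
    rw [Fin.sum_univ_castSucc, ← ih (fun i => f i.castSucc) (fun i => g i.castSucc) h0
      (fun i => by rw [← h, Fin.succ_castSucc])]
    exact h (Fin.last n)

variable {K G : Type*} [Field K] [Group G]
variable {M : Type*} [AddCommGroup M] [Module K M] [Module (MonoidAlgebra K G) M]
  [IsScalarTower K (MonoidAlgebra K G) M] {π : G → M →ₗ[K] M}

/-- terms of a series as submodules over the group algebra -/
def gs (hπ : ∀ g x, π g x = ga K g • x) {n : ℕ} (c : GSeries K π n) (i : Fin (n + 1)) :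
    Submodule (MonoidAlgebra K G) M :=
  ofStable (c.s i) (fun g x hx => by rw [← hπ]; exact c.inv i g x hx)

/-- comparison of factors -/
noncomputable def gsEquiv (hπ : ∀ g x, π g x = ga K g • x) {n : ℕ} (c : GSeries K π n) (i : Fin n) :
    c.factor i ≃ₗ[K] SQ (gs hπ c i.castSucc) (gs hπ c i.succ) :=
  Submodule.Quotient.restrictScalarsEquiv K
    ((gs hπ c i.castSucc).comap (gs hπ c i.succ).subtype)

lemma gsEquiv_act (hπ : ∀ g x, π g x = ga K g • x) {n : ℕ} (c : GSeries K π n) (i : Fin n) (g : G)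
    (x : c.factor i) : gsEquiv hπ c i (c.act i g x) = ga K g • gsEquiv hπ c i x := by
  obtain ⟨x, rfl⟩ := Submodule.Quotient.mk_surjective _ x
  have h : (π g).restrict (c.inv i.succ g) x =
    (⟨ga K g • (x : M), by rw [← hπ]; exact c.inv _ g _ x.2⟩ : c.s i.succ) := Subtype.ext (hπ g x)
  have h2 : c.act i g (Submodule.Quotient.mk x) =
    Submodule.Quotient.mk ((π g).restrict (c.inv i.succ g) x) := rfl
  rw [h2, h]
  rfl

lemma mult_series [FiniteDimensional K M] (hπ : ∀ g x, π g x = ga K g • x) {n : ℕ}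
    (c : GSeries K π n) (S : Type*) [AddCommGroup S] [Module (MonoidAlgebra K G) S] :
    mult (MonoidAlgebra K G) S M =
      ∑ i : Fin n, mult (MonoidAlgebra K G) S (SQ (gs hπ c i.castSucc) (gs hπ c i.succ)) := by
  have := noeth K (G := G) (M := M)
  have := artin K (G := G) (M := M)
  rw [← tele n (fun i => mult (MonoidAlgebra K G) S (gs hπ c i))]
  · have : gs hπ c (Fin.last n) = ⊤ := by
      rw [eq_top_iff]; intro x _
      show x ∈ c.s (Fin.last n)
      rw [c.top]; trivial
    rw [this]
    exact (mult_congr S Submodule.topEquiv).symm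
  · have : gs hπ c 0 = ⊥ := by
      rw [eq_bot_iff]; intro x hx
      change x ∈ c.s 0 at hx
      rw [c.bot] at hx; exact hx
    rw [this]
    exact mult_of_subsingleton S
  · intro i
    have hle : gs hπ c i.castSucc ≤ gs hπ c i.succ := c.mono (Fin.castSucc_lt_succ).le
    rw [mult_add S ((gs hπ c i.castSucc).comap (gs hπ c i.succ).subtype),
      mult_congr S (Submodule.comapSubtypeEquivOfLe hle)]

lemma finrank_series {V : Type*} [AddCommGroup V] [Module K V] [FiniteDimensional K V]
    {π : G → V →ₗ[K] V} {n : ℕ} (c : GSeries K π n) :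
    Module.finrank K V = ∑ i, Module.finrank K (c.factor i) := by
  rw [← tele n (fun i => Module.finrank K (c.s i))]
  · rw [c.top, finrank_top]
  · rw [c.bot, finrank_bot]
  · intro i
    have hle : c.s i.castSucc ≤ c.s i.succ := c.mono (Fin.castSucc_lt_succ).le
    rw [← (Submodule.comapSubtypeEquivOfLe hle).finrank_eq, add_comm]
    exact (Submodule.finrank_quotient_add_finrank _).symm

variable {M' : Type*} [AddCommGroup M'] [Module K M'] [Module (MonoidAlgebra K G) M']
  [IsScalarTower K (MonoidAlgebra K G) M'] {π' : G → M' →ₗ[K] M'}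

lemma factorEquiv_lin (hπ : ∀ g x, π g x = ga K g • x) (hπ' : ∀ g x, π' g x = ga K g • x) {n : ℕ}
    (c : GSeries K π n) (c' : GSeries K π' n) (i j : Fin n) (h : GSeries.FactorEquiv c i c' j) :
    Nonempty (SQ (gs hπ c i.castSucc) (gs hπ c i.succ) ≃ₗ[MonoidAlgebra K G]
      SQ (gs hπ' c' j.castSucc) (gs hπ' c' j.succ)) := by
  obtain ⟨e, he⟩ := h
  let f : SQ (gs hπ c i.castSucc) (gs hπ c i.succ) ≃ₗ[K]
      SQ (gs hπ' c' j.castSucc) (gs hπ' c' j.succ) :=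
    (gsEquiv hπ c i).symm.trans (e.trans (gsEquiv hπ' c' j))
  have hf : ∀ (g : G) x, f (ga K g • x) = ga K g • f x := by
    intro g x
    obtain ⟨y, rfl⟩ := (gsEquiv hπ c i).surjective x
    rw [← gsEquiv_act]
    simp only [f, LinearEquiv.trans_apply, LinearEquiv.symm_apply_apply]
    rw [he, gsEquiv_act]
  clear_value f
  exact ⟨LinearEquiv.ofBijective
    (MonoidAlgebra.equivariantOfLinearOfComm f.toLinearMap hf) f.bijective⟩

lemma same_mult [FiniteDimensional K M] [FiniteDimensional K M']
    (hπ : ∀ g x, π g x = ga K g • x) (hπ' : ∀ g x, π' g x = ga K g • x) {n : ℕ}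
    (c : GSeries K π n) (c' : GSeries K π' n) (σ : Fin n ≃ Fin n)
    (h : ∀ i, GSeries.FactorEquiv c i c' (σ i)) :
    (∀ (S : Type*) [AddCommGroup S] [Module (MonoidAlgebra K G) S],
      mult (MonoidAlgebra K G) S M = mult (MonoidAlgebra K G) S M') ∧
    Module.finrank K M = Module.finrank K M' := by
  have := noeth K (G := G) (M := M)
  have := artin K (G := G) (M := M)
  constructor
  · intro S _ _
    rw [mult_series hπ c, mult_series hπ' c', ← Equiv.sum_comp σ (fun i => mult (MonoidAlgebra K G) S (SQ (gs hπ' c' i.castSucc) (gs hπ' c' i.succ)))]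
    refine Finset.sum_congr rfl fun i _ => ?_
    obtain ⟨e⟩ := factorEquiv_lin hπ hπ' c c' i (σ i) (h i)
    exact mult_congr S e
  · rw [finrank_series c, finrank_series c', ← Equiv.sum_comp σ (fun i => Module.finrank K (c'.factor i))]
    refine Finset.sum_congr rfl fun i _ => ?_
    obtain ⟨e, -⟩ := h i
    exact e.finrank_eq

lemma exists_series_of_mult_ne_zero {R M S : Type*} [Ring R] [AddCommGroup M] [Module R M]
    [AddCommGroup S] [Module R S] (h : mult R S M ≠ 0) :
    ∃ c : CompositionSeries (Submodule R M), c.head = ⊥ ∧ c.last = ⊤ ∧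
      ∃ i : Fin c.length, Nonempty (SQ (c i.castSucc) (c i.succ) ≃ₗ[R] S) := by
  unfold mult at h
  split_ifs at h with hc
  · obtain ⟨i, -, hi⟩ := Finset.exists_ne_zero_of_sum_ne_zero h
    refine ⟨_, hc.choose_spec.1, hc.choose_spec.2, i, ?_⟩
    unfold ind at hi
    by_contra hh
    exact hi (if_neg hh)
  · exact absurd rfl h

lemma even_of_heven (hπ : ∀ g x, π g x = ga K g • x)
    (heven : ∀ (m : ℕ) (c : GSeries K π m), c.IsCompositionSeries → ∀ i : Fin m,
        (∃ q : QuadraticForm K (c.factor i), q ≠ 0 ∧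
          ∀ (g : G) (x), q (c.act i g x) = q x) → Even (Module.finrank K (c.factor i)))
    (X : Type*) [AddCommGroup X] [Module K X] [Module (MonoidAlgebra K G) X]
    [IsScalarTower K (MonoidAlgebra K G) X]
    (hX : mult (MonoidAlgebra K G) X M ≠ 0) (hq : ∃ q : QuadraticForm K X, q ≠ 0 ∧ QInv G q) :
    Even (Module.finrank K X) := by
  obtain ⟨d, hd0, hd1, i, ⟨e⟩⟩ := exists_series_of_mult_ne_zero hX
  let c : GSeries K π d.length :=
    { s := fun i => (d i).restrictScalars K
      mono := fun a b hab => (CompositionSeries.strictMono d).monotone hab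
      inv := fun i g x hx => by
        rw [hπ]
        exact (d i).smul_mem _ hx
      bot := by
        have : d 0 = ⊥ := hd0
        rw [this]; rfl
      top := by
        have : d (Fin.last _) = ⊤ := hd1
        rw [this]; rfl }
  have hgs : ∀ i, gs hπ c i = d i := fun i => rfl
  have hcs : c.IsCompositionSeries := by
    intro j
    have hlt := d.step j
    have hsimp : IsSimpleModule (MonoidAlgebra K G) (SQ (d j.castSucc) (d j.succ)) :=
      (covBy_iff hlt.lt.le).1 hlt
    have hsimp' : IsSimpleModule (MonoidAlgebra K G) (SQ (gs hπ c j.castSucc) (gs hπ c j.succ)) := hsimp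
    have := IsSimpleModule.nontrivial (MonoidAlgebra K G) (SQ (gs hπ c j.castSucc) (gs hπ c j.succ))
    refine ⟨(gsEquiv hπ c j).toEquiv.nontrivial, ?_⟩
    intro W hW
    let W' : Submodule (MonoidAlgebra K G) (SQ (gs hπ c j.castSucc) (gs hπ c j.succ)) :=
      ofStable (W.map (gsEquiv hπ c j).toLinearMap) (by
        rintro g _ ⟨x, hx, rfl⟩
        exact ⟨_, hW g x hx, gsEquiv_act hπ c j g x⟩)
    have hW' : ∀ x, x ∈ W ↔ gsEquiv hπ c j x ∈ W' := by
      intro x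
      constructor
      · intro hx; exact ⟨x, hx, rfl⟩
      · rintro ⟨y, hy, hxy⟩
        rwa [← (gsEquiv hπ c j).injective hxy]
    rcases eq_bot_or_eq_top W' with h | h
    · left
      rw [eq_bot_iff]
      intro x hx
      rw [hW', h, Submodule.mem_bot] at hx
      rw [Submodule.mem_bot]
      exact (gsEquiv hπ c j).injective (by rw [hx, map_zero])
    · right
      rw [eq_top_iff]
      intro x _
      rw [hW', h]
      trivial
  obtain ⟨q, hq0, hqi⟩ := hq
  let ε : c.factor i ≃ₗ[K] X := (gsEquiv hπ c i).trans (e.restrictScalars K)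
  have hε : ∀ g x, ε (c.act i g x) = ga K g • ε x := by
    intro g x
    change e (gsEquiv hπ c i (c.act i g x)) = ga K g • e (gsEquiv hπ c i x)
    rw [gsEquiv_act]
    exact e.map_smul _ _
  have := heven _ c hcs i ⟨q.comp ε.toLinearMap, ?_, ?_⟩
  · rwa [ε.finrank_eq] at this
  · intro h
    apply hq0
    ext x
    have := congrArg (fun q : QuadraticForm K (c.factor i) => q (ε.symm x)) h
    simpa using this
  · intro g x
    simp only [QuadraticMap.comp_apply, LinearEquiv.coe_coe]
    rw [hε, hqi]

end bridge
end QS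

set_option linter.unusedSectionVars false

namespace QS
section modof
open TensorProduct
variable {K G : Type*} [Field K] [Group G]

/-- module over the group algebra attached to a representation -/
noncomputable abbrev modOf {M : Type*} [AddCommGroup M] [Module K M] (ρ : G →* Module.End K M) :
    Module (MonoidAlgebra K G) M :=
  Module.compHom M (Representation.asAlgebraHom (k := K) (G := G) (V := M) ρ).toRingHom

lemma modOf_tower {M : Type*} [AddCommGroup M] [Module K M] (ρ : G →* Module.End K M) :
    let _ := modOf ρ
    IsScalarTower K (MonoidAlgebra K G) M := by
  let _ := modOf ρ
  refine ⟨fun a r x => ?_⟩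
  change Representation.asAlgebraHom (k := K) (G := G) (V := M) ρ (a • r) x =
    a • Representation.asAlgebraHom (k := K) (G := G) (V := M) ρ r x
  rw [map_smul]; rfl

lemma modOf_ga {M : Type*} [AddCommGroup M] [Module K M] (ρ : G →* Module.End K M) (g : G) (x : M) :
    let _ := modOf ρ
    ga K g • x = ρ g x := by
  let _ := modOf ρ
  change Representation.asAlgebraHom (k := K) (G := G) (V := M) ρ (MonoidAlgebra.single g 1) x = ρ g x
  rw [Representation.asAlgebraHom_single_one]

lemma exists_modOf {M : Type*} [AddCommGroup M] [Module K M] (ρ : G →* Module.End K M) :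
    ∃ (_ : Module (MonoidAlgebra K G) M), IsScalarTower K (MonoidAlgebra K G) M ∧
      ∀ (g : G) (x : M), ga K g • x = ρ g x :=
  ⟨modOf ρ, modOf_tower ρ, modOf_ga ρ⟩

/-- extend scalars along `k → Ω` -/
lemma exists_bc (F k Ω : Type*) [Field F] [Field k] [Field Ω] [Algebra k Ω]
    {S : Type*} [AddCommGroup S] [Module k S] [Module (MonoidAlgebra F G) S]
    (hc : ∀ (c : k) (g : G) (x : S), c • ga F g • x = ga F g • c • x) :
    ∃ (_ : Module (MonoidAlgebra Ω G) (Ω ⊗[k] S)),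
      IsScalarTower Ω (MonoidAlgebra Ω G) (Ω ⊗[k] S) ∧
      ∀ (g : G) (a : Ω) (x : S), ga Ω g • (a ⊗ₜ[k] x) = a ⊗ₜ[k] (ga F g • x) := by
  let r : G →* Module.End k S :=
    { toFun := fun g =>
        { toFun := fun x => ga F g • x
          map_add' := fun x y => smul_add _ _ _
          map_smul' := fun c x => (hc c g x).symm }
      map_one' := by
        ext x; change ga F (1 : G) • x = x
        rw [ga_one, one_smul]
      map_mul' := fun g h => by
        ext x; change ga F (g * h) • x = ga F g • ga F h • x
        rw [← ga_mul, mul_smul] }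
  obtain ⟨m, h1, h2⟩ := exists_modOf ((Module.End.baseChangeHom k Ω S).toRingHom.toMonoidHom.comp r)
  refine ⟨m, h1, fun g a x => ?_⟩
  rw [h2]
  rfl

lemma mult_le {R M N P : Type*} [Ring R] [AddCommGroup M] [Module R M] [AddCommGroup N] [Module R N]
    [AddCommGroup P] [Module R P] [IsNoetherian R M] [IsArtinian R M]
    (Y : Type*) [AddCommGroup Y] [Module R Y] (i : N →ₗ[R] M) (hi : Function.Injective i)
    (f : N →ₗ[R] P) (hf : Function.Surjective f) : mult R Y P ≤ mult R Y M := by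
  have : IsNoetherian R N := isNoetherian_of_injective i hi
  have : IsArtinian R N := isArtinian_of_injective i hi
  rw [← mult_congr Y (f.quotKerEquivOfSurjective hf), mult_add Y (LinearMap.range i),
    ← mult_congr Y (LinearEquiv.ofInjective i hi), mult_add Y (LinearMap.ker f)]
  omega

lemma mult_bc_le {F k Ω V N S : Type*} [Field F] [Field k] [Field Ω] [Algebra F k] [Algebra k Ω]
    [Algebra F Ω] [IsScalarTower F k Ω] [AddCommGroup V] [Module F V] [FiniteDimensional F V]
    [Module (MonoidAlgebra F G) V] [IsScalarTower F (MonoidAlgebra F G) V]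
    [AddCommGroup N] [Module F N] [Module (MonoidAlgebra F G) N]
    [IsScalarTower F (MonoidAlgebra F G) N]
    [AddCommGroup S] [Module F S] [Module k S] [IsScalarTower F k S]
    [Module (MonoidAlgebra F G) S] [IsScalarTower F (MonoidAlgebra F G) S]
    [Module (MonoidAlgebra Ω G) (Ω ⊗[F] V)] [IsScalarTower Ω (MonoidAlgebra Ω G) (Ω ⊗[F] V)]
    [Module (MonoidAlgebra Ω G) (Ω ⊗[F] N)] [IsScalarTower Ω (MonoidAlgebra Ω G) (Ω ⊗[F] N)]
    [Module (MonoidAlgebra Ω G) (Ω ⊗[k] S)] [IsScalarTower Ω (MonoidAlgebra Ω G) (Ω ⊗[k] S)]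
    (hV : ∀ (g : G) (a : Ω) (x : V), ga Ω g • (a ⊗ₜ[F] x) = a ⊗ₜ[F] (ga F g • x))
    (hN : ∀ (g : G) (a : Ω) (x : N), ga Ω g • (a ⊗ₜ[F] x) = a ⊗ₜ[F] (ga F g • x))
    (hS : ∀ (g : G) (a : Ω) (x : S), ga Ω g • (a ⊗ₜ[k] x) = a ⊗ₜ[k] (ga F g • x))
    (i : N →ₗ[MonoidAlgebra F G] V) (hi : Function.Injective i)
    (p : N →ₗ[MonoidAlgebra F G] S) (hp : Function.Surjective p)
    (Y : Type*) [AddCommGroup Y] [Module (MonoidAlgebra Ω G) Y] :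
    mult (MonoidAlgebra Ω G) Y (Ω ⊗[k] S) ≤ mult (MonoidAlgebra Ω G) Y (Ω ⊗[F] V) := by
  have := noeth Ω (G := G) (M := Ω ⊗[F] V)
  have := artin Ω (G := G) (M := Ω ⊗[F] V)
  let i1 : Ω ⊗[F] N →ₗ[Ω] Ω ⊗[F] V := LinearMap.baseChange Ω (i.restrictScalars F)
  have hi1 : Function.Injective i1 :=
    Module.Flat.lTensor_preserves_injective_linearMap (M := Ω) (i.restrictScalars F) hi
  let j : S →ₗ[F] Ω ⊗[k] S := (TensorProduct.mk k Ω S 1).restrictScalars F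
  let f1 : Ω ⊗[F] N →ₗ[Ω] Ω ⊗[k] S := LinearMap.liftBaseChange Ω (j.comp (p.restrictScalars F))
  have hf1t : ∀ (a : Ω) (x : N), f1 (a ⊗ₜ x) = a ⊗ₜ[k] (p x) := by
    intro a x
    simp only [f1, LinearMap.liftBaseChange_tmul]
    change a • ((1 : Ω) ⊗ₜ[k] p x) = _
    rw [TensorProduct.smul_tmul', smul_eq_mul, mul_one]
  have hi1t : ∀ (a : Ω) (x : N), i1 (a ⊗ₜ x) = a ⊗ₜ[F] (i x) := fun a x => rfl
  clear_value i1 f1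
  have hi1g : ∀ (g : G) x, i1 (ga Ω g • x) = ga Ω g • i1 x := by
    intro g x
    induction x using TensorProduct.induction_on with
    | zero => simp
    | tmul a x => rw [hN, hi1t, hi1t, hV, map_smul]
    | add x y hx hy => rw [smul_add, map_add, hx, hy, map_add, smul_add]
  have hf1g : ∀ (g : G) x, f1 (ga Ω g • x) = ga Ω g • f1 x := by
    intro g x
    induction x using TensorProduct.induction_on with
    | zero => simp
    | tmul a x => rw [hN, hf1t, hf1t, hS, map_smul]
    | add x y hx hy => rw [smul_add, map_add, hx, hy, map_add, smul_add]
  have hf1 : Function.Surjective f1 := by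
    intro y
    induction y using TensorProduct.induction_on with
    | zero => exact ⟨0, map_zero _⟩
    | tmul a x =>
      obtain ⟨n, rfl⟩ := hp x
      exact ⟨a ⊗ₜ n, hf1t a n⟩
    | add x y hx hy =>
      obtain ⟨x, rfl⟩ := hx
      obtain ⟨y, rfl⟩ := hy
      exact ⟨x + y, map_add _ _ _⟩
  exact mult_le Y (MonoidAlgebra.equivariantOfLinearOfComm i1 hi1g) hi1
    (MonoidAlgebra.equivariantOfLinearOfComm f1 hf1g) hf1

lemma ND_baseChange {k Ω S : Type*} [Field k] [Field Ω] [Algebra k Ω] [AddCommGroup S] [Module k S]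
    [FiniteDimensional k S] (b : LinearMap.BilinForm k S)
    (hs : ∀ x y, b x y = b y x) (hb : ND b) :
    ND (LinearMap.BilinForm.baseChange Ω b) := by
  classical
  intro x hx
  have hnd : b.Nondegenerate :=
    ⟨fun x hx => hb x hx, fun x hx => hb x fun y => by rw [hs]; exact hx y⟩
  let v := Module.finBasis k S
  let w := b.dualBasis hnd v
  let V := v.baseChange Ω
  let W := w.baseChange Ω
  apply W.repr.injective
  ext i
  have h := hx (V i)
  rw [← W.sum_repr x] at h
  simp only [map_sum, LinearMap.sum_apply, map_smul, LinearMap.smul_apply] at h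
  rw [Finset.sum_eq_single i] at h
  · simpa [V, W, w, Module.Basis.baseChange_apply, LinearMap.BilinForm.baseChange_tmul,
      LinearMap.BilinForm.apply_dualBasis_left] using h
  · intro j _ hj
    simp [V, W, w, Module.Basis.baseChange_apply, LinearMap.BilinForm.baseChange_tmul,
      LinearMap.BilinForm.apply_dualBasis_left, hj, hj.symm]
  · simp

end modof
end QS

set_option linter.unusedSectionVars false

namespace QS
section good
open TensorProduct
universe u w

lemma char_two_line {F G : Type*} [Field F] [Finite F] [Group G] (h2 : (2 : F) = 0)
    (S : Type*) [AddCommGroup S] [Module F S] [Module (MonoidAlgebra F G) S]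
    [IsScalarTower F (MonoidAlgebra F G) S] [IsSimpleModule (MonoidAlgebra F G) S]
    (q : QuadraticForm F S) (hq : QInv G q) (hp : ∀ x y, polar q x y = 0) (h0 : q ≠ 0) :
    Module.finrank F S = 1 ∧ ∀ (g : G) (x : S), ga F g • x = x := by
  have hadd : ∀ x y, q (x + y) = q x + q y := by
    intro x y
    rw [QuadraticMap.map_add q, hp, add_zero]
  let N0 : Submodule F S :=
    { carrier := {x | q x = 0}
      zero_mem' := QuadraticMap.map_zero q
      add_mem' := fun {x y} hx hy => by
        change q (x + y) = 0
        rw [hadd, show q x = 0 from hx, show q y = 0 from hy, add_zero]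
      smul_mem' := fun c x hx => by
        change q (c • x) = 0
        rw [QuadraticMap.map_smul, show q x = 0 from hx, smul_zero] }
  let N : Submodule (MonoidAlgebra F G) S := ofStable N0 (fun g x hx => by
    change q (ga F g • x) = 0
    rw [hq]; exact hx)
  have hN : N = ⊥ := by
    rcases eq_bot_or_eq_top N with h | h
    · exact h
    · exfalso; apply h0
      ext x
      have : x ∈ N := by rw [h]; trivial
      exact this
  have hz : ∀ x, q x = 0 → x = 0 := by
    intro x hx
    have : x ∈ N := hx
    rwa [hN, Submodule.mem_bot] at this
  have hinj : ∀ x y, q x = q y → x = y := by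
    intro x y h
    rw [← sub_eq_zero]
    apply hz
    rw [sub_eq_add_neg, hadd, QuadraticMap.map_neg, h, ← two_mul, h2, zero_mul]
  refine ⟨?_, fun g x => hinj _ _ (hq g x)⟩
  have := IsSimpleModule.nontrivial (MonoidAlgebra F G) S
  obtain ⟨v, hv⟩ := exists_ne (0 : S)
  rw [finrank_eq_one_iff_of_nonzero' v hv]
  intro y
  have hqv : q v ≠ 0 := fun h => hv (hz v h)
  have hch : ringChar F = 2 := by
    have := CharP.ringChar_of_prime_eq_zero Nat.prime_two (R := F) (by exact_mod_cast h2)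
    exact this
  obtain ⟨c, hc⟩ := FiniteField.isSquare_of_char_two hch (q y / q v)
  refine ⟨c, hinj _ _ ?_⟩
  rw [QuadraticMap.map_smul, ← hc, smul_eq_mul, div_mul_cancel₀ _ hqv]

lemma good_of_even {F : Type*} {Ω : Type w} {G V : Type*} [Field F] [Finite F] [Group G] [Field Ω] [Algebra F Ω]
    [IsAlgClosed Ω] [AddCommGroup V] [Module F V] [FiniteDimensional F V]
    [Module (MonoidAlgebra F G) V] [IsScalarTower F (MonoidAlgebra F G) V]
    [Module (MonoidAlgebra Ω G) (Ω ⊗[F] V)] [IsScalarTower Ω (MonoidAlgebra Ω G) (Ω ⊗[F] V)]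
    (hV : ∀ (g : G) (a : Ω) (x : V), ga Ω g • (a ⊗ₜ[F] x) = a ⊗ₜ[F] (ga F g • x))
    (hP : ∀ (X : Type (max w u)) [AddCommGroup X] [Module Ω X] [Module (MonoidAlgebra Ω G) X]
      [IsScalarTower Ω (MonoidAlgebra Ω G) X], mult (MonoidAlgebra Ω G) X (Ω ⊗[F] V) ≠ 0 →
      (∃ q : QuadraticForm Ω X, q ≠ 0 ∧ QInv G q) → Even (Module.finrank Ω X))
    (S : Type u) [AddCommGroup S] [Module F S] [Module (MonoidAlgebra F G) S]
    [IsScalarTower F (MonoidAlgebra F G) S] [FiniteDimensional F S]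
    [IsSimpleModule (MonoidAlgebra F G) S] (hS : mult (MonoidAlgebra F G) S V ≠ 0) :
    Good F G S := by
  obtain ⟨A, B, hAB, ⟨e⟩⟩ := exists_of_mult_ne_zero S hS
  let p : B →ₗ[MonoidAlgebra F G] S := e.toLinearMap.comp (Submodule.mkQ _)
  have hp : Function.Surjective p := e.surjective.comp (Submodule.mkQ_surjective _)
  clear_value p
  obtain ⟨mB, tB, hB⟩ := exists_bc (G := G) F F Ω (S := B) (fun c g x => by
    have : SMulCommClass F (MonoidAlgebra F G) B := IsScalarTower.to_smulCommClass
    exact smul_comm _ _ _)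
  refine ⟨?_, ?_⟩
  · intro q hq hpol
    by_contra h0
    by_cases h2 : (2 : F) = 0
    · obtain ⟨hf, htriv⟩ := char_two_line h2 S q hq hpol h0
      obtain ⟨mS, tS, hSS⟩ := exists_bc (G := G) F F Ω (S := S) (fun c g x => by
        have : SMulCommClass F (MonoidAlgebra F G) S := IsScalarTower.to_smulCommClass
        exact smul_comm _ _ _)
      have hle := mult_bc_le (k := F) hV hB hSS B.subtype B.subtype_injective p hp (Ω ⊗[F] S)
      have hf1 : Module.finrank Ω (Ω ⊗[F] S) = 1 := by rw [Module.finrank_baseChange, hf]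
      have ht1 : ∀ (g : G) (x : Ω ⊗[F] S), ga Ω g • x = x := by
        intro g x
        induction x using TensorProduct.induction_on with
        | zero => simp
        | tmul a x => rw [hSS, htriv]
        | add x y hx hy => rw [smul_add, hx, hy]
      have hsim : IsSimpleModule Ω (Ω ⊗[F] S) := isSimpleModule_iff_finrank_eq_one.2 hf1
      have hnt := IsSimpleModule.nontrivial Ω (Ω ⊗[F] S)
      have hsim' : IsSimpleModule (MonoidAlgebra Ω G) (Ω ⊗[F] S) := by
        rw [isSimpleModule_iff]
        refine { exists_pair_ne := ⟨⊥, ⊤, bot_ne_top⟩, eq_bot_or_eq_top := fun N => ?_ }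
        rcases eq_bot_or_eq_top (N.restrictScalars Ω) with h | h
        · left; exact (Submodule.restrictScalars_eq_bot_iff _ _ _).1 h
        · right; exact (Submodule.restrictScalars_eq_top_iff _ _ _).1 h
      have hm : mult (MonoidAlgebra Ω G) (Ω ⊗[F] S) (Ω ⊗[F] V) ≠ 0 := by
        rw [mult_of_simple (M := Ω ⊗[F] S) (Ω ⊗[F] S), if_pos ⟨LinearEquiv.refl _ _⟩] at hle
        omega
      obtain ⟨x, hx⟩ := exists_ne (0 : Ω ⊗[F] S)
      obtain ⟨ℓ, hℓ⟩ : ∃ ℓ : Module.Dual Ω (Ω ⊗[F] S), ℓ x ≠ 0 := by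
        by_contra hcon
        push Not at hcon
        exact hx ((Module.forall_dual_apply_eq_zero_iff Ω x).1 hcon)
      have := hP _ hm ⟨QuadraticMap.linMulLin ℓ ℓ, ?_, ?_⟩
      · rw [hf1] at this; exact absurd this (by decide)
      · intro hzero
        have h4 := congrArg (fun q : QuadraticForm Ω (Ω ⊗[F] S) => q x) hzero
        simp [hℓ] at h4
      · intro g x
        rw [ht1]
    · apply h0
      ext x
      have := hpol x x
      rw [QuadraticMap.polar_self] at this
      have h3 : (2 : F) * q x = 0 := by rw [← this]; simp
      simpa [h2] using h3
  · intro h2 k _ _ _ _ _ hc b hs hb hbi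
    have : FiniteDimensional F k := Module.Finite.of_finite
    have : FiniteDimensional k S := Module.Finite.of_restrictScalars_finite F k S
    let φ : k →ₐ[F] Ω := IsAlgClosed.lift
    letI : Algebra k Ω := φ.toRingHom.toAlgebra
    have : IsScalarTower F k Ω := IsScalarTower.of_algebraMap_eq fun x => (φ.commutes x).symm
    obtain ⟨mS, tS, hSS⟩ := exists_bc (G := G) F k Ω (S := S) hc
    have hle := fun (Y : Type (max w u)) [AddCommGroup Y] [Module (MonoidAlgebra Ω G) Y] =>
      mult_bc_le (k := k) hV hB hSS B.subtype B.subtype_injective p hp Y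
    have h2Ω : (2 : Ω) ≠ 0 := by
      intro h
      apply h2
      apply (algebraMap F Ω).injective
      rw [map_zero, ← h, map_ofNat]
    rw [← Module.finrank_baseChange (R := Ω)]
    let b' := LinearMap.BilinForm.baseChange Ω b
    have hnd : ND b' := ND_baseChange b hs hb
    have hb't : ∀ (a a' : Ω) (x y : S), b' (a ⊗ₜ x) (a' ⊗ₜ y) = b x y • (a * a') :=
      fun a a' x y => LinearMap.BilinForm.baseChange_tmul _ _ _ _ _
    clear_value b'
    have hs' : ∀ x y, b' x y = b' y x := by
      intro x y
      induction x using TensorProduct.induction_on with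
      | zero => simp
      | add x z hx hz => simp only [map_add, LinearMap.add_apply, hx, hz]
      | tmul a x =>
        induction y using TensorProduct.induction_on with
        | zero => simp
        | add x z hx hz => simp only [map_add, LinearMap.add_apply, hx, hz]
        | tmul c y => rw [hb't, hb't, hs, mul_comm]
    have hinv' : ∀ (g : G) x y, b' (ga Ω g • x) (ga Ω g • y) = b' x y := by
      intro g x y
      induction x using TensorProduct.induction_on with
      | zero => simp
      | add x z hx hz => simp only [smul_add, map_add, LinearMap.add_apply, hx, hz]
      | tmul a x =>
        induction y using TensorProduct.induction_on with
        | zero => simp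
        | add x z hx hz => simp only [smul_add, map_add, LinearMap.add_apply, hx, hz]
        | tmul c y => rw [hSS, hSS, hb't, hb't, hbi]
    refine even_of_form_aux (G := G) h2Ω _ (Ω ⊗[k] S) (LinearMap.BilinMap.toQuadraticMap b') ?_ ?_ ?_ rfl
    · intro g x
      simp only [LinearMap.BilinMap.toQuadraticMap_apply, hinv']
    · intro x hx
      apply hnd
      intro y
      have := hx y
      rw [polarBilin_apply_apply, LinearMap.BilinMap.polar_toQuadraticMap, hs' y x, ← two_mul] at this
      simpa [h2Ω] using this
    · intro Y _ _ _ _ _ _ hY hq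
      refine hP Y ?_ hq
      have := hle Y
      omega

end good
end QS

/-- Let `F` be a finite field, `G` a finite group, and `V, V'`
finite-dimensional `F`-representations of `G` with the same multiset of composition
factors.  Assume every composition factor of `V ⊗ F̄` (`F̄` an algebraic closure of `F`)
admitting a nonzero `G`-invariant quadratic form has even dimension over `F̄`.  Then any
two nondegenerate `G`-invariant quadratic forms `Q` on `V` and `Q'` on `V'` give
isometric quadratic spaces `(V, Q)` and `(V', Q')`. -/
theorem statement3 {F G V V' : Type*} [Field F] [Finite F] [Group G] [Finite G]
    [AddCommGroup V] [Module F V] [FiniteDimensional F V]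
    [AddCommGroup V'] [Module F V'] [FiniteDimensional F V']
    (ρ : Representation F G V) (ρ' : Representation F G V')
    -- `V` and `V'` have the same multiset of composition factors:
    (hsame : ∃ (n : ℕ) (c : GSeries F (fun g => ρ g) n) (c' : GSeries F (fun g => ρ' g) n)
      (σ : Fin n ≃ Fin n), c.IsCompositionSeries ∧ c'.IsCompositionSeries ∧
        ∀ i, GSeries.FactorEquiv c i c' (σ i))
    -- every composition factor of `V ⊗ F̄` with a nonzero invariant quadratic form
    -- has even dimension over `F̄`:
    (heven : ∀ (m : ℕ)
      (c : GSeries (AlgebraicClosure F)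
        (fun g => LinearMap.baseChange (AlgebraicClosure F) (ρ g)) m),
      c.IsCompositionSeries → ∀ i : Fin m,
        (∃ q : QuadraticForm (AlgebraicClosure F) (c.factor i), q ≠ 0 ∧
          ∀ (g : G) (x), q (c.act i g x) = q x) →
        Even (Module.finrank (AlgebraicClosure F) (c.factor i))) :
    ∀ (Q : QuadraticForm F V) (Q' : QuadraticForm F V'),
      (∀ x : V, (∀ y : V, polar (⇑Q) x y = 0) → x = 0) →
      (∀ (g : G) (x : V), Q (ρ g x) = Q x) →
      (∀ x : V', (∀ y : V', polar (⇑Q') x y = 0) → x = 0) →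
      (∀ (g : G) (x : V'), Q' (ρ' g x) = Q' x) →
      ∃ φ : V ≃ₗ[F] V', ∀ x : V, Q' (φ x) = Q x := by
  intro Q Q' hQ hQi hQ' hQi'
  obtain ⟨n, c, c', σ, -, -, hσ⟩ := hsame
  obtain ⟨mV, tV, hV⟩ := QS.exists_modOf (K := F) (G := G) (M := V) ρ
  obtain ⟨mV', tV', hV'⟩ := QS.exists_modOf (K := F) (G := G) (M := V') ρ'
  obtain ⟨hmult, hdim⟩ := QS.same_mult (π := fun g => ρ g) (π' := fun g => ρ' g)
    (fun g x => (hV g x).symm) (fun g x => (hV' g x).symm) c c' σ hσ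
  have := QS.noeth F (G := G) (M := V)
  have := QS.artin F (G := G) (M := V)
  have := QS.noeth F (G := G) (M := V')
  have := QS.artin F (G := G) (M := V')
  obtain ⟨mT, tT, hT⟩ := QS.exists_bc (G := G) F F (AlgebraicClosure F) (S := V) (fun a g x => by
    have : SMulCommClass F (MonoidAlgebra F G) V := IsScalarTower.to_smulCommClass
    exact smul_comm _ _ _)
  have hπ : ∀ (g : G) (x : TensorProduct F (AlgebraicClosure F) V),
      LinearMap.baseChange (AlgebraicClosure F) (ρ g) x = QS.ga (AlgebraicClosure F) g • x := by
    intro g x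
    induction x using TensorProduct.induction_on with
    | zero => simp
    | tmul a x => rw [hT, hV, LinearMap.baseChange_tmul]
    | add x y hx hy => rw [smul_add, map_add, hx, hy]
  have hnd : QS.ND (polarBilin Q) := fun x hx => hQ x fun y => hx y
  have hnd' : QS.ND (polarBilin Q') := fun x hx => hQ' x fun y => hx y
  have hprod : ∀ p : V × V', (Q.prod (-Q')) p = Q p.1 - Q' p.2 := by
    intro p
    simp [sub_eq_add_neg]
  obtain ⟨L, hL, hLd⟩ := QS.core (K := F) (G := G) _ (V × V') (Q.prod (-Q'))
    (by
      intro g p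
      rw [hprod, hprod, Prod.smul_fst, Prod.smul_snd, hV, hV', hQi, hQi'])
    (by
      intro p hp
      have hp' : ∀ y : V × V', polar Q p.1 y.1 - polar Q' p.2 y.2 = 0 := by
        intro y
        rw [← hp y, polarBilin_apply_apply]
        simp only [QuadraticMap.polar, hprod, Prod.fst_add, Prod.snd_add]
        ring
      ext
      · apply hQ
        intro y
        simpa using hp' (y, 0)
      · apply hQ'
        intro y
        simpa using hp' (0, y))
    (by
      intro S _ _ _ _ _ _ hS
      rw [QS.mult_prod, ← hmult] at hS
      refine QS.good_of_even (Ω := AlgebraicClosure F) hT ?_ S (by omega)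
      intro X _ _ _ _ hX hq
      exact QS.even_of_heven (π := fun g => LinearMap.baseChange (AlgebraicClosure F) (ρ g))
        hπ heven X hX hq)
    (by
      intro S _ _ _ _ _ _ _
      rw [QS.mult_prod, ← hmult]
      exact ⟨_, rfl⟩)
    rfl
  rw [Module.finrank_prod] at hLd
  refine QS.extract Q Q' hnd hnd' hdim _ L ?_ (by omega) rfl
  intro p hp
  have := hL p hp
  rw [hprod] at this
  exact sub_eq_zero.1 this
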